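/- arXiv:2101.06226 — 2 statements merged into one kernel-verified Lean document; each statement's English description precedes it below -/
import Mathlib

section
/- Let q be a prime power with q ≥ 4 and let H be a finite almost simple group whose socle S is isomorphic to PSL_2(q), with H ≠ S. Then for every subgroup K of H with H = KS there exists a pp-element x ∈ S such that H = ⟨K, x⟩ (that is, t(H) = 1). -/
open scoped Pointwise MatrixGroups

/-- An element of a group is a `pp`-element if its order is a prime power. -/
def IsPPElement {G : Type*} [Group G] (g : G) : Prop := IsPrimePow (orderOf g)

/-! A nontrivial element of `K` acts on `S` by an automorphism `κ ≠ 1`. Suppose that `S` has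
elements of prime power order `n` and that any two of them generating distinct subgroups generate
`S`. If `κ` fixed every subgroup generated by such an element `x`, it would fix every conjugate of
`⟨x⟩`, and simplicity of `S` would give `κ = 1`. Hence `⟨κ x⟩ ≠ ⟨x⟩` for some `x`, and a
`κ`-invariant subgroup containing `x` also contains `κ x`, so it is `S`.

For `q = p ^ f` with `f ≥ 2` and `q ≠ 4, 9`, take for `n` the part of `p ^ f + 1` at an odd prime
`r` modulo which `p` has order `2 f`. A subgroup `M` generated by two such subgroups acts on the
projective line over an extension of `𝔽_q` in which every element of `M` has a fixed point; Klein's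
count of the fixed points bounds `|M|` from below and leaves only `M = S`. For `q = p` with `r = p`,
and for `q = 4` with `r = 5`, Sylow's theorem gives enough subgroups of order `r` in `M`.

For `q = 9` elements of order `5` do not suffice, as two of them may generate one of the twelve
subgroups `A₅` of `A₆`. These form two classes of six, the rows and columns of a `6 × 6` grid whose
cells are the subgroups of order `5`, and some cell is neither fixed by `κ` nor on a row or column
fixed by `κ`; a generator of that cell will do. -/

section Automorphisms

variable {G : Type*} [Group G]

/-- The automorphism `κ` of `G` has a `pp`-generator: some `pp`-element of `G` lies in no proper
`κ`-invariant subgroup. For `κ` conjugation by `k` in an overgroup, this says that `k` and a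
`pp`-element of `G` generate a group containing `G`. -/
def HasPPGenerator (κ : MulAut G) : Prop :=
  ∃ x : G, IsPPElement x ∧ ∀ M : Subgroup G, x ∈ M → κ • M = M → M = ⊤

theorem mulAut_smul_zpowers (κ : MulAut G) (x : G) :
    κ • Subgroup.zpowers x = Subgroup.zpowers (κ x) :=
  MonoidHom.map_zpowers κ.toMonoidHom x

theorem card_mulAut_smul (κ : MulAut G) (M : Subgroup G) :
    Nat.card (κ • M : Subgroup G) = Nat.card M :=
  Nat.card_congr (Subgroup.equivSMul κ M).symm.toEquiv

theorem mulAut_smul_conj_smul (κ : MulAut G) (g : G) (X : Subgroup G) :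
    κ • MulAut.conj g • X = MulAut.conj (κ g) • κ • X := by
  rw [← mul_smul, ← mul_smul]
  congr 1
  ext x
  simp [MulAut.conj_apply]

theorem mem_normalizer_iff_conj_smul_eq {X : Subgroup G} {g : G} :
    g ∈ Subgroup.normalizer (X : Set G) ↔ MulAut.conj g • X = X :=
  Subgroup.mem_normalizer_iff_map_conj_eq

theorem normalCore_eq_bot [IsSimpleGroup G] {M : Subgroup G} (hM : M ≠ ⊤) : M.normalCore = ⊥ :=
  M.normalCore_normal.eq_bot_or_eq_top.resolve_right
    fun h ↦ hM (top_le_iff.1 (h ▸ M.normalCore_le))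

theorem normalizer_ne_top [IsSimpleGroup G] {X : Subgroup G} (hbot : X ≠ ⊥) (htop : X ≠ ⊤) :
    Subgroup.normalizer (X : Set G) ≠ ⊤ := fun h ↦
  (Subgroup.normalizer_eq_top_iff.1 h).eq_bot_or_eq_top.elim hbot htop

/-- If `κ` fixes every conjugate of `X`, then every conjugate of `g⁻¹ * κ g` normalizes `X`. -/
theorem mulAut_eq_one_of_forall_smul_conj_smul [IsSimpleGroup G] {X : Subgroup G} (hbot : X ≠ ⊥)
    (htop : X ≠ ⊤) {κ : MulAut G} (hκ : ∀ g : G, κ • MulAut.conj g • X = MulAut.conj g • X) :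
    κ = 1 := by
  ext g
  have hmove (b : G) : MulAut.conj (κ g * b) • X = MulAut.conj (g * b) • X := by
    calc MulAut.conj (κ g * b) • X
        = MulAut.conj (κ g) • κ • MulAut.conj b • X := by rw [map_mul, mul_smul, hκ]
      _ = κ • MulAut.conj (g * b) • X := by
          rw [← mulAut_smul_conj_smul, ← mul_smul (MulAut.conj g), ← map_mul]
      _ = MulAut.conj (g * b) • X := hκ _
  have hmem : g⁻¹ * κ g ∈ (Subgroup.normalizer (X : Set G)).normalCore := fun b ↦ by
    rw [mem_normalizer_iff_conj_smul_eq, mul_assoc, mul_assoc, map_mul, mul_smul, map_mul,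
      mul_smul, hmove, ← mul_smul, ← mul_smul, ← map_mul, ← map_mul]
    simp
  rw [normalCore_eq_bot (normalizer_ne_top hbot htop), Subgroup.mem_bot, inv_mul_eq_one] at hmem
  exact hmem.symm

theorem HasPPGenerator.of_forall_orderOf_eq [IsSimpleGroup G] (hcyc : ¬ IsCyclic G) {n : ℕ}
    (hn : IsPrimePow n) {x : G} (hx : orderOf x = n)
    (hgen : ∀ y z : G, orderOf y = n → orderOf z = n → Subgroup.zpowers y ≠ Subgroup.zpowers z →
      ∀ M : Subgroup G, y ∈ M → z ∈ M → M = ⊤)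
    {κ : MulAut G} (hκ : κ ≠ 1) : HasPPGenerator κ := by
  by_contra hbad
  refine hκ (mulAut_eq_one_of_forall_smul_conj_smul (X := Subgroup.zpowers x) ?_ ?_ fun g ↦ ?_)
  · rw [Ne, Subgroup.zpowers_eq_bot]
    rintro rfl
    exact hn.ne_one (hx.symm.trans orderOf_one)
  · exact fun h ↦ hcyc (isCyclic_iff_exists_zpowers_eq_top.2 ⟨x, h⟩)
  · by_contra hne
    rw [mulAut_smul_zpowers, mulAut_smul_zpowers] at hne
    have horder : orderOf (MulAut.conj g x) = n := (MulEquiv.orderOf_eq _ x).trans hx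
    refine hbad ⟨MulAut.conj g x, by rwa [IsPPElement, horder], fun M hM hκM ↦ ?_⟩
    refine hgen _ _ ((MulEquiv.orderOf_eq _ _).trans horder) horder hne M ?_ hM
    exact hκM ▸ Subgroup.smul_mem_pointwise_smul _ κ M hM

end Automorphisms

section AlmostSimple

variable {H : Type*} [Group H] {S : Subgroup H} [S.Normal]

theorem conjNormal_ne_one (hcent : Subgroup.centralizer (S : Set H) = ⊥) {k : H} (hk : k ≠ 1) :
    (MulAut.conjNormal k : MulAut S) ≠ 1 := by
  intro h
  refine hk (Subgroup.mem_bot.1 (hcent ▸ Subgroup.mem_centralizer_iff.2 fun s hs ↦ ?_))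
  have hfix : k * s * k⁻¹ = s := by
    rw [← MulAut.conjNormal_apply k ⟨s, hs⟩, h, MulAut.one_apply]
  exact (mul_inv_eq_iff_eq_mul.1 hfix).symm

theorem conjNormal_smul_subgroupOf {k : H} {L : Subgroup H} (hk : k ∈ L) :
    (MulAut.conjNormal k : MulAut S) • L.subgroupOf S = L.subgroupOf S := by
  ext s
  rw [Subgroup.mem_pointwise_smul_iff_inv_smul_mem, Subgroup.mem_subgroupOf,
    Subgroup.mem_subgroupOf, ← map_inv, MulAut.smul_def, MulAut.conjNormal_apply,
    Subgroup.mul_mem_cancel_right _ (inv_mem (inv_mem hk)),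
    Subgroup.mul_mem_cancel_left _ (inv_mem hk)]

theorem exists_sup_closure_eq_top_of_hasPPGenerator
    (hcent : Subgroup.centralizer (S : Set H) = ⊥)
    (hgen : ∀ κ : MulAut S, κ ≠ 1 → HasPPGenerator κ) {K : Subgroup H} (hbot : K ≠ ⊥)
    (hK : K ⊔ S = ⊤) : ∃ x ∈ S, IsPPElement x ∧ K ⊔ Subgroup.closure {x} = ⊤ := by
  obtain ⟨k, hkK, hk⟩ := K.bot_or_exists_ne_one.resolve_left hbot
  obtain ⟨x, hx, hM⟩ := hgen _ (conjNormal_ne_one hcent hk)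
  refine ⟨x, x.2, by rwa [IsPPElement, Subgroup.orderOf_coe], ?_⟩
  have hS : (K ⊔ Subgroup.closure {(x : H)}).subgroupOf S = ⊤ :=
    hM _ (Subgroup.mem_sup_right (Subgroup.subset_closure rfl))
      (conjNormal_smul_subgroupOf (Subgroup.mem_sup_left hkK))
  rw [eq_top_iff, ← hK]
  exact sup_le le_sup_left (Subgroup.subgroupOf_eq_top.1 hS)

end AlmostSimple

section PrimeSubgroups

variable {G : Type*} [Group G]

/-- The subgroups of order `r` of the subgroup `M`, as subgroups of the ambient group. -/
def subgroupsOfOrder (r : ℕ) (M : Subgroup G) : Set (Subgroup G) := {P | Nat.card P = r ∧ P ≤ M}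

/-- The conjugates of the subgroup `X` by the elements of the subgroup `M`. -/
def conjugatesBy (M X : Subgroup G) : Set (Subgroup G) := {Y | ∃ m ∈ M, MulAut.conj m • X = Y}

theorem smul_mem_subgroupsOfOrder (κ : MulAut G) {r : ℕ} {M P : Subgroup G}
    (hP : P ∈ subgroupsOfOrder r M) : κ • P ∈ subgroupsOfOrder r (κ • M) :=
  ⟨(card_mulAut_smul κ P).trans hP.1, Subgroup.pointwise_smul_le_pointwise_smul_iff.2 hP.2⟩

theorem zpowers_mem_subgroupsOfOrder {M : Subgroup G} {r : ℕ} {x : G} (hr : orderOf x = r)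
    (hx : x ∈ M) : Subgroup.zpowers x ∈ subgroupsOfOrder r M :=
  ⟨(Nat.card_zpowers x).trans hr, Subgroup.zpowers_le.2 hx⟩

theorem eq_zpowers_of_mem {r : ℕ} [Fact r.Prime] {P : Subgroup G} (hP : Nat.card P = r) {x : G}
    (hx : x ∈ P) (hx1 : x ≠ 1) : P = Subgroup.zpowers x := by
  have : Finite P := Nat.finite_of_card_ne_zero (hP ▸ (Fact.out : r.Prime).ne_zero)
  have horder : orderOf x = r :=
    ((Nat.dvd_prime Fact.out).1 (hP ▸ Subgroup.orderOf_dvd_natCard P hx)).resolve_left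
      (mt orderOf_eq_one_iff.1 hx1)
  exact (Subgroup.eq_of_le_of_card_ge (Subgroup.zpowers_le.2 hx)
    (by rw [hP, Nat.card_zpowers, horder])).symm

theorem ncard_conjugatesBy_mul_card (M X : Subgroup G) :
    (conjugatesBy M X).ncard * Nat.card (M ⊓ Subgroup.normalizer (X : Set G) : Subgroup G) =
      Nat.card M := by
  let _ : MulAction M (Subgroup G) := MulAction.compHom (Subgroup G) (MulAut.conj.comp M.subtype)
  have horbit : conjugatesBy M X = MulAction.orbit M X := by
    ext Y
    exact ⟨fun ⟨m, hm, h⟩ ↦ ⟨⟨m, hm⟩, h⟩, fun ⟨m, h⟩ ↦ ⟨m, m.2, h⟩⟩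
  have hstab : M ⊓ Subgroup.normalizer (X : Set G) =
      (MulAction.stabilizer M X).map M.subtype := by
    ext g
    rw [Subgroup.mem_inf, mem_normalizer_iff_conj_smul_eq, Subgroup.mem_map]
    exact ⟨fun ⟨hg, h⟩ ↦ ⟨⟨g, hg⟩, h, rfl⟩, by rintro ⟨m, hm, rfl⟩; exact ⟨m.2, hm⟩⟩
  rw [hstab, Subgroup.card_map_of_injective M.subtype_injective, horbit,
    ← MulAction.index_stabilizer, Subgroup.index_mul_card]

theorem conj_smul_map_subtype {M : Subgroup G} (m : M) (Q : Subgroup M) :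
    MulAut.conj (m : G) • Q.map M.subtype = (MulAut.conj m • Q).map M.subtype :=
  (Subgroup.map_map Q (MulAut.conj (m : G)).toMonoidHom M.subtype).trans
    (Subgroup.map_map Q M.subtype (MulAut.conj m).toMonoidHom).symm

theorem setOf_zpowers_eq {r : ℕ} [hr : Fact r.Prime] {M P : Subgroup G}
    (hP : P ∈ subgroupsOfOrder r M) :
    {x | (x ∈ M ∧ orderOf x = r) ∧ Subgroup.zpowers x = P} = (P : Set G) \ {1} := by
  ext x
  constructor
  · rintro ⟨⟨-, hx⟩, rfl⟩
    exact ⟨Subgroup.mem_zpowers x, fun h ↦ hr.out.one_lt.ne (by rw [← hx, h, orderOf_one])⟩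
  · rintro ⟨hx, hx1⟩
    have hPx := eq_zpowers_of_mem hP.1 hx hx1
    exact ⟨⟨hP.2 hx, by rw [← hP.1, hPx, Nat.card_zpowers]⟩, hPx.symm⟩

variable [Finite G]

theorem ncard_orderOf_eq {r : ℕ} [hr : Fact r.Prime] (M : Subgroup G) :
    {x | x ∈ M ∧ orderOf x = r}.ncard = (subgroupsOfOrder r M).ncard * (r - 1) := by
  classical
  have := Fintype.ofFinite G
  have := Fintype.ofFinite (Subgroup G)
  rw [Set.ncard_eq_toFinset_card', Set.ncard_eq_toFinset_card' (subgroupsOfOrder r M)]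
  rw [Finset.card_eq_sum_card_fiberwise (f := Subgroup.zpowers)
    (t := (subgroupsOfOrder r M).toFinset), Finset.sum_const_nat]
  · intro P hP
    rw [Set.mem_toFinset] at hP
    rw [← hP.1, ← Set.ncard_coe_finset, Finset.coe_filter]
    simp only [Set.mem_toFinset, Set.mem_ofPred_eq]
    rw [hP.1, setOf_zpowers_eq hP, Set.ncard_sdiff_singleton_of_mem P.one_mem, ← hP.1]
    rfl
  · intro x hx
    simp only [Set.coe_toFinset] at hx ⊢
    exact zpowers_mem_subgroupsOfOrder hx.2 hx.1

end PrimeSubgroups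

section SylowPrime

variable {G : Type*} [Group G] [Finite G] {r : ℕ} [Fact r.Prime] {M : Subgroup G}

theorem factorization_eq_one_of_dvd {n : ℕ} (hr : r ∣ n) (hr2 : ¬ r ^ 2 ∣ n) :
    n.factorization r = 1 := by
  have hn : n ≠ 0 := by rintro rfl; exact hr2 (dvd_zero _)
  have h1 := ((Fact.out : r.Prime).dvd_iff_one_le_factorization hn).1 hr
  have h2 := mt ((Fact.out : r.Prime).pow_dvd_iff_le_factorization hn (k := 2)).2 hr2
  omega

variable (hr : r ∣ Nat.card M) (hr2 : ¬ r ^ 2 ∣ Nat.card M)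
include hr hr2

theorem map_sylow_mem_subgroupsOfOrder (Q : Sylow r M) :
    (Q : Subgroup M).map M.subtype ∈ subgroupsOfOrder r M := by
  refine ⟨?_, Subgroup.map_subtype_le _⟩
  rw [Subgroup.card_map_of_injective M.subtype_injective, Sylow.card_eq_multiplicity,
    factorization_eq_one_of_dvd hr hr2, pow_one]

theorem exists_sylow_map_eq {P : Subgroup G} (hP : P ∈ subgroupsOfOrder r M) :
    ∃ Q : Sylow r M, (Q : Subgroup M).map M.subtype = P := by
  refine ⟨Sylow.ofCard (P.subgroupOf M) ?_, ?_⟩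
  · rw [factorization_eq_one_of_dvd hr hr2, pow_one,
      Nat.card_congr (Subgroup.subgroupOfEquivOfLe hP.2).toEquiv, hP.1]
  · rw [Sylow.coe_ofCard, Subgroup.subgroupOf_map_subtype, inf_eq_left.2 hP.2]

theorem ncard_subgroupsOfOrder : (subgroupsOfOrder r M).ncard = Nat.card (Sylow r M) := by
  rw [← Nat.card_coe_set_eq]
  refine (Nat.card_congr (Equiv.ofBijective
    (fun Q ↦ ⟨_, map_sylow_mem_subgroupsOfOrder hr hr2 Q⟩) ⟨fun Q Q' h ↦ ?_, ?_⟩)).symm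
  · exact Sylow.ext (Subgroup.map_injective M.subtype_injective (congrArg Subtype.val h))
  · rintro ⟨P, hP⟩
    obtain ⟨Q, hQ⟩ := exists_sylow_map_eq hr hr2 hP
    exact ⟨Q, Subtype.ext hQ⟩

theorem ncard_subgroupsOfOrder_modEq : (subgroupsOfOrder r M).ncard ≡ 1 [MOD r] :=
  ncard_subgroupsOfOrder hr hr2 ▸ card_sylow_modEq_one r M

theorem subgroupsOfOrder_eq_conjugatesBy {P : Subgroup G} (hP : P ∈ subgroupsOfOrder r M) :
    subgroupsOfOrder r M = conjugatesBy M P := by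
  ext P'
  constructor
  · intro hP'
    obtain ⟨Q, rfl⟩ := exists_sylow_map_eq hr hr2 hP
    obtain ⟨Q', rfl⟩ := exists_sylow_map_eq hr hr2 hP'
    obtain ⟨m, rfl⟩ := MulAction.exists_smul_eq M Q Q'
    refine ⟨m, m.2, ?_⟩
    exact conj_smul_map_subtype m Q
  · rintro ⟨m, hm, rfl⟩
    simpa only [Subgroup.conj_smul_eq_self_of_mem hm] using
      smul_mem_subgroupsOfOrder (MulAut.conj m) hP

theorem ncard_subgroupsOfOrder_mul_card_normalizer {P : Subgroup G}
    (hP : P ∈ subgroupsOfOrder r M) :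
    (subgroupsOfOrder r M).ncard *
      Nat.card (M ⊓ Subgroup.normalizer (P : Set G) : Subgroup G) = Nat.card M := by
  rw [subgroupsOfOrder_eq_conjugatesBy hr hr2 hP, ncard_conjugatesBy_mul_card]

end SylowPrime

section SmallIndex

variable {G : Type*} [Group G] [Finite G] [IsSimpleGroup G]

theorem card_dvd_factorial_index {M : Subgroup G} (hM : M ≠ ⊤) :
    Nat.card G ∣ M.index.factorial := by
  have hindex : M.normalCore.index ∣ M.index.factorial := by
    rw [Subgroup.normalCore_eq_ker, Subgroup.index_ker, Subgroup.index_eq_card, ← Nat.card_perm]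
    exact Subgroup.card_subgroup_dvd_card _
  rwa [normalCore_eq_bot hM, Subgroup.index_bot] at hindex

theorem eq_top_of_index_lt_prime {r : ℕ} (hr : r.Prime) (hdvd : r ∣ Nat.card G) {M : Subgroup G}
    (hM : M.index < r) : M = ⊤ := by
  by_contra h
  exact hM.not_ge ((hr.dvd_factorial).1 (hdvd.trans (card_dvd_factorial_index h)))

/-- Two subgroups of order `r` force `r + 1` of them by Sylow, hence a subgroup of index less than
`r`. -/
theorem HasPPGenerator.of_card_lt (hcyc : ¬ IsCyclic G) {r : ℕ} [hr : Fact r.Prime]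
    (hdvd : r ∣ Nat.card G) (hdvd2 : ¬ r ^ 2 ∣ Nat.card G) (hlt : Nat.card G < r ^ 2 * (r + 1))
    {κ : MulAut G} (hκ : κ ≠ 1) : HasPPGenerator κ := by
  obtain ⟨x, hx⟩ := exists_prime_orderOf_dvd_card' r hdvd
  refine HasPPGenerator.of_forall_orderOf_eq hcyc hr.out.isPrimePow hx ?_ hκ
  intro y z hy hz hyz M hyM hzM
  refine eq_top_of_index_lt_prime hr.out hdvd ?_
  have hrM : r ∣ Nat.card M := hy ▸ Subgroup.orderOf_dvd_natCard M hyM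
  have hrM2 : ¬ r ^ 2 ∣ Nat.card M := fun h ↦ hdvd2 (h.trans M.card_subgroup_dvd_card)
  have hyP := zpowers_mem_subgroupsOfOrder hy hyM
  have hzP := zpowers_mem_subgroupsOfOrder hz hzM
  have hone : 1 < (subgroupsOfOrder r M).ncard :=
    (Set.one_lt_ncard_iff (Set.toFinite _)).2 ⟨_, _, hyP, hzP, hyz⟩
  have hcount : r + 1 ≤ (subgroupsOfOrder r M).ncard := by
    have := (Nat.modEq_iff_dvd' hone.le).1 (ncard_subgroupsOfOrder_modEq hrM hrM2).symm
    have := Nat.le_of_dvd (by omega) this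
    omega
  have hnorm :
      r ≤ Nat.card (M ⊓ Subgroup.normalizer (Subgroup.zpowers y : Set G) : Subgroup G) := by
    conv_lhs => rw [← hy, ← Nat.card_zpowers]
    exact Subgroup.card_le_of_le (le_inf (Subgroup.zpowers_le.2 hyM) Subgroup.le_normalizer)
  have hcard : (r + 1) * r ≤ Nat.card M :=
    (Nat.mul_le_mul hcount hnorm).trans_eq
      (ncard_subgroupsOfOrder_mul_card_normalizer hrM hrM2 hyP)
  refine lt_of_mul_lt_mul_right ?_ (Nat.zero_le ((r + 1) * r))
  calc M.index * ((r + 1) * r) ≤ M.index * Nat.card M := Nat.mul_le_mul_left _ hcard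
    _ = Nat.card G := M.index_mul_card
    _ < r ^ 2 * (r + 1) := hlt
    _ = r * ((r + 1) * r) := by ring

end SmallIndex

section ConjugacyClasses

variable {G : Type*} [Group G]

theorem self_mem_conjugatesBy (M X : Subgroup G) : X ∈ conjugatesBy M X :=
  ⟨1, M.one_mem, by rw [map_one, one_smul]⟩

theorem conjugatesBy_top_eq_of_mem {A B : Subgroup G} (hB : B ∈ conjugatesBy ⊤ A) :
    conjugatesBy ⊤ B = conjugatesBy ⊤ A := by
  obtain ⟨g, -, rfl⟩ := hB
  ext C
  constructor
  · rintro ⟨h, -, rfl⟩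
    exact ⟨h * g, trivial, by rw [map_mul, mul_smul]⟩
  · rintro ⟨h, -, rfl⟩
    exact ⟨h * g⁻¹, trivial, by rw [← mul_smul, ← map_mul, inv_mul_cancel_right]⟩

theorem eq_bot_of_forall_le_conj [IsSimpleGroup G] {A Y : Subgroup G} (hA : A ≠ ⊤)
    (hY : ∀ g : G, Y ≤ MulAut.conj g • A) : Y = ⊥ := by
  refine le_bot_iff.1 (normalCore_eq_bot hA ▸ fun y hy b ↦ ?_)
  have hmem := Subgroup.mem_pointwise_smul_iff_inv_smul_mem.1 (hY b⁻¹ hy)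
  rwa [← map_inv, inv_inv] at hmem

/-- `u` permutes `{t, t⁻¹}`, so `u ^ 2` centralizes `t`. -/
theorem sq_mul_comm_of_mem_normalizer {u t : G} (ht : orderOf t = 3)
    (hu : u ∈ Subgroup.normalizer (Subgroup.zpowers t : Set G)) : u ^ 2 * t = t * u ^ 2 := by
  have hfin : IsOfFinOrder t := orderOf_pos_iff.1 (ht ▸ three_pos)
  have hmem : u * t * u⁻¹ ∈ Subgroup.zpowers t :=
    (Subgroup.mem_normalizer_iff.1 hu t).1 (Subgroup.mem_zpowers t)
  obtain ⟨i, hconj⟩ := Submonoid.mem_powers_iff _ _ |>.1 (hfin.mem_powers_iff_mem_zpowers.2 hmem)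
  have hi : ¬ 3 ∣ i := fun h ↦ by
    have : u * t * u⁻¹ = 1 := by rw [← hconj, orderOf_dvd_iff_pow_eq_one.1 (ht ▸ h)]
    rw [conj_eq_one_iff.1 this, orderOf_one] at ht
    omega
  have htwice : u ^ 2 * t * (u ^ 2)⁻¹ = t ^ (i * i) := by
    rw [pow_mul, hconj, conj_pow, hconj, sq]
    group
  have hsq : i * i ≡ 1 [MOD orderOf t] := by
    rw [ht, Nat.ModEq, Nat.mul_mod]
    have : i % 3 = 1 ∨ i % 3 = 2 := by omega
    rcases this with h | h <;> rw [h]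
  rwa [pow_eq_pow_iff_modEq.2 hsq, pow_one, mul_inv_eq_iff_eq_mul] at htwice

end ConjugacyClasses

section SymmetricSix

variable {α : Type*} [Fintype α] [DecidableEq α] (hα : Fintype.card α = 6)
include hα

theorem cycleType_of_orderOf_three {σ : Equiv.Perm α} (hσ : orderOf σ = 3) :
    σ.cycleType = {3} ∨ σ.cycleType = {3, 3} := by
  obtain ⟨n, hn⟩ := Equiv.Perm.cycleType_prime_order (hσ ▸ Nat.prime_three)
  have hsum := σ.sum_cycleType_le
  rw [hn, hα, hσ, Multiset.sum_replicate, smul_eq_mul] at hsum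
  rw [hσ] at hn
  obtain rfl | rfl : n = 0 ∨ n = 1 := by omega
  · exact Or.inl hn
  · exact Or.inr hn

omit [DecidableEq α] in
theorem ncard_perm_orderOf_three_le : {σ : Equiv.Perm α | orderOf σ = 3}.ncard ≤ 80 := by
  classical
  let T : Finset (Equiv.Perm α) := {σ | σ.cycleType = {3} ∨ σ.cycleType = {3, 3}}
  refine (Set.ncard_le_ncard (t := (T : Set (Equiv.Perm α))) (fun σ hσ ↦ ?_)
    (Set.toFinite _)).trans ?_
  · simpa [T] using cycleType_of_orderOf_three hα hσ
  · simp only [T, Set.ncard_coe_finset, Finset.filter_or]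
    refine (Finset.card_union_le _ _).trans ?_
    rw [Equiv.Perm.card_of_cycleType, Equiv.Perm.card_of_cycleType, hα]
    decide

theorem three_le_card_support {σ : Equiv.Perm α} (hσ : orderOf σ = 3) : 3 ≤ σ.support.card := by
  rw [← Equiv.Perm.sum_cycleType]
  rcases cycleType_of_orderOf_three hα hσ with h | h <;> rw [h] <;> decide

end SymmetricSix

section Order360

variable {G : Type*} [Group G]

/-- The points of a subgroup of a group of order `360` are its subgroups of order `5`. -/
abbrev points (M : Subgroup G) : Set (Subgroup G) := subgroupsOfOrder 5 M

/-- A line in a group of order `360` is a proper subgroup with at least two points. In `A₆` the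
lines are the two classes of six subgroups `A₅`, and the points form a six by six grid. -/
def IsLine (M : Subgroup G) : Prop := M ≠ ⊤ ∧ (points M).Nontrivial

theorem mem_points_conj {M P : Subgroup G} {g : G} (hg : g ∈ M) (hP : P ∈ points M) :
    MulAut.conj g • P ∈ points M := by
  simpa only [Subgroup.conj_smul_eq_self_of_mem hg] using
    smul_mem_subgroupsOfOrder (MulAut.conj g) hP

theorem points_top {M P : Subgroup G} (hP : P ∈ points M) : P ∈ points ⊤ :=
  ⟨hP.1, le_top⟩

theorem IsLine.mulAut_smul {M : Subgroup G} (h : IsLine M) (κ : MulAut G) : IsLine (κ • M) := by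
  obtain ⟨htop, P, hP, P', hP', hne⟩ := h
  refine ⟨fun h ↦ htop (top_le_iff.1 ?_), κ • P, smul_mem_subgroupsOfOrder κ hP, κ • P',
    smul_mem_subgroupsOfOrder κ hP', fun h ↦ hne (smul_left_cancel κ h)⟩
  exact (Subgroup.pointwise_smul_le_pointwise_smul_iff (a := κ)).1 (le_top.trans h.ge)

theorem IsLine.of_mem_conjugatesBy {M N A : Subgroup G} (h : IsLine A) (hM : M ∈ conjugatesBy N A) :
    IsLine M := by
  obtain ⟨g, -, rfl⟩ := hM
  exact h.mulAut_smul _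

theorem IsLine.ne_bot {M : Subgroup G} (h : IsLine M) : M ≠ ⊥ := by
  rintro rfl
  obtain ⟨-, P, hP, P', hP', hne⟩ := h
  exact hne ((le_bot_iff.1 hP.2).trans (le_bot_iff.1 hP'.2).symm)

theorem five_dvd_card_of_mem_points {M P : Subgroup G} (hP : P ∈ points M) : 5 ∣ Nat.card M :=
  hP.1 ▸ Subgroup.card_dvd_of_le hP.2

theorem ne_bot_of_mem_points {M P : Subgroup G} (hP : P ∈ points M) : P ≠ ⊥ := by
  rintro rfl
  have := hP.1
  rw [Subgroup.card_bot] at this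
  omega

local instance : Fact (Nat.Prime 5) := ⟨Nat.prime_five⟩

theorem five_dvd_card_normalizer {M P : Subgroup G} (hP : P ∈ points M) :
    5 ∣ Nat.card (M ⊓ Subgroup.normalizer (P : Set G) : Subgroup G) :=
  five_dvd_card_of_mem_points ⟨hP.1, le_inf hP.2 Subgroup.le_normalizer⟩

variable [Finite G] (hG : Nat.card G = 360)
include hG

omit [Finite G] in
theorem not_five_sq_dvd_card (M : Subgroup G) : ¬ 5 ^ 2 ∣ Nat.card M := fun h ↦ by
  have := hG ▸ h.trans M.card_subgroup_dvd_card
  omega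

theorem ncard_points_mul_card_normalizer {M P : Subgroup G} (hP : P ∈ points M) :
    (points M).ncard * Nat.card (M ⊓ Subgroup.normalizer (P : Set G) : Subgroup G) = Nat.card M :=
  ncard_subgroupsOfOrder_mul_card_normalizer (five_dvd_card_of_mem_points hP)
    (not_five_sq_dvd_card hG M) hP

theorem ncard_points_mod_five {M P : Subgroup G} (hP : P ∈ points M) :
    (points M).ncard % 5 = 1 :=
  ncard_subgroupsOfOrder_modEq (five_dvd_card_of_mem_points hP) (not_five_sq_dvd_card hG M)

variable [IsSimpleGroup G]

theorem card_le_sixty {M : Subgroup G} (hM : M ≠ ⊤) : Nat.card M ≤ 60 := by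
  have hindex : 6 ≤ M.index := by
    by_contra! h
    have hdvd := card_dvd_factorial_index hM
    rw [hG] at hdvd
    interval_cases M.index <;> revert hdvd <;> decide
  nlinarith [hG ▸ M.index_mul_card]

theorem IsLine.ncard_points {A : Subgroup G} (hA : IsLine A) : (points A).ncard = 6 := by
  obtain ⟨P, hP⟩ := hA.2.nonempty
  have hmul := ncard_points_mul_card_normalizer hG hP
  obtain ⟨k, hk⟩ := five_dvd_card_normalizer hP
  have hmod := ncard_points_mod_five hG hP
  have hle := card_le_sixty hG hA.1
  have hone : 1 < (points A).ncard := Set.one_lt_ncard_iff_nontrivial.2 hA.2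
  have hne : (points A).ncard ≠ 11 := fun h ↦ by
    have : 11 ∣ 360 := hG ▸ (Dvd.intro _ (h ▸ hmul)).trans A.card_subgroup_dvd_card
    omega
  rw [hk] at hmul
  have hk0 : k ≠ 0 := by
    rintro rfl
    exact Nat.card_pos.ne' (hmul.symm.trans (mul_zero _))
  have : (points A).ncard ≤ 12 := by nlinarith [Nat.pos_of_ne_zero hk0]
  omega

theorem IsLine.ncard_points_top {A : Subgroup G} (hA : IsLine A) :
    (points (⊤ : Subgroup G)).ncard = 36 := by
  obtain ⟨P, hP⟩ := hA.2.nonempty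
  have hmul := ncard_points_mul_card_normalizer hG (points_top hP)
  obtain ⟨k, hk⟩ := five_dvd_card_normalizer (points_top hP)
  have hmod := ncard_points_mod_five hG (points_top hP)
  have hsub (g : G) : points (MulAut.conj g • A) ⊆ points ⊤ := fun _ ↦ points_top
  have hsix (g : G) : (points (MulAut.conj g • A)).ncard = 6 :=
    (hA.mulAut_smul _).ncard_points hG
  have hge : 6 ≤ (points (⊤ : Subgroup G)).ncard :=
    (hsix 1).symm.trans_le (Set.ncard_le_ncard (hsub 1) (Set.toFinite _))
  have hne : (points (⊤ : Subgroup G)).ncard ≠ 6 := fun h ↦ by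
    refine ne_bot_of_mem_points hP (eq_bot_of_forall_le_conj hA.1 fun g ↦ ?_)
    have heq := Set.eq_of_subset_of_ncard_le (hsub g) (by rw [h, hsix]) (Set.toFinite _)
    exact (heq ▸ points_top hP : P ∈ points (MulAut.conj g • A)).2
  rw [hk, Subgroup.card_top, hG] at hmul
  have hdvd : (points (⊤ : Subgroup G)).ncard ∈ Nat.divisors 72 :=
    Nat.mem_divisors.2 ⟨⟨k, by linarith⟩, by norm_num⟩
  have hdivisors : Nat.divisors 72 = {1, 2, 3, 4, 6, 8, 9, 12, 18, 24, 36, 72} := by decide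
  simp only [hdivisors, Finset.mem_insert, Finset.mem_singleton] at hdvd
  omega

theorem IsLine.card_normalizer {A P : Subgroup G} (hA : IsLine A) (hP : Nat.card P = 5) :
    Nat.card (Subgroup.normalizer (P : Set G)) = 10 := by
  have hmul := ncard_points_mul_card_normalizer hG (M := ⊤) ⟨hP, le_top⟩
  rw [hA.ncard_points_top hG, top_inf_eq, Subgroup.card_top, hG] at hmul
  omega

theorem IsLine.notMem_normalizer_of_orderOf {A P : Subgroup G} (hA : IsLine A)
    (hP : Nat.card P = 5) {y : G} (hy : orderOf y = 3) :
    y ∉ Subgroup.normalizer (P : Set G) := fun h ↦ by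
  have := Subgroup.orderOf_dvd_natCard _ h
  rw [hy, hA.card_normalizer hG hP] at this
  omega

theorem IsLine.not_five_dvd_card_normalizer {A : Subgroup G} (hA : IsLine A) {t : G}
    (ht : orderOf t = 3) :
    ¬ 5 ∣ Nat.card (A ⊓ Subgroup.normalizer (Subgroup.zpowers t : Set G) : Subgroup G) := fun h ↦ by
  obtain ⟨⟨u, hu⟩, horder⟩ := exists_prime_orderOf_dvd_card' 5 h
  rw [Subgroup.orderOf_mk] at horder
  have hcard : Nat.card (Subgroup.zpowers (u ^ 2)) = 5 := by
    rw [Nat.card_zpowers, (horder ▸ by decide : (orderOf u).Coprime 2).orderOf_pow, horder]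
  refine hA.notMem_normalizer_of_orderOf hG hcard ht ?_
  rw [mem_normalizer_iff_conj_smul_eq, mulAut_smul_zpowers, MulAut.conj_apply,
    ← sq_mul_comm_of_mem_normalizer ht hu.2, mul_inv_cancel_right]

theorem IsLine.card_eq_thirty_or_sixty {A : Subgroup G} (hA : IsLine A) :
    Nat.card A = 30 ∨ Nat.card A = 60 := by
  obtain ⟨P, hP⟩ := hA.2.nonempty
  have hmul := ncard_points_mul_card_normalizer hG hP
  have hdvd := five_dvd_card_normalizer hP
  have hle := card_le_sixty hG hA.1
  have hpos : 0 < Nat.card A := Nat.card_pos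
  rw [hA.ncard_points hG] at hmul
  omega

theorem IsLine.ncard_subgroupsOfOrder_three {A : Subgroup G} (hA : IsLine A) :
    (subgroupsOfOrder 3 A).ncard = 10 := by
  have hcard := hA.card_eq_thirty_or_sixty hG
  have hdvd : 3 ∣ Nat.card A := by omega
  have hdvd2 : ¬ 3 ^ 2 ∣ Nat.card A := by omega
  obtain ⟨⟨t, htA⟩, ht⟩ := exists_prime_orderOf_dvd_card' 3 hdvd
  rw [Subgroup.orderOf_mk] at ht
  have hT := zpowers_mem_subgroupsOfOrder ht htA
  have hmul := ncard_subgroupsOfOrder_mul_card_normalizer hdvd hdvd2 hT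
  have hmod : _ % 3 = 1 % 3 := ncard_subgroupsOfOrder_modEq hdvd hdvd2
  have hfive := hA.not_five_dvd_card_normalizer hG ht
  obtain ⟨k, hk⟩ :
      3 ∣ Nat.card (A ⊓ Subgroup.normalizer (Subgroup.zpowers t : Set G) : Subgroup G) :=
    hT.1 ▸ Subgroup.card_dvd_of_le (le_inf hT.2 Subgroup.le_normalizer)
  rw [hk] at hmul hfive
  obtain ⟨m, hm⟩ : 5 ∣ (subgroupsOfOrder 3 A).ncard :=
    (Nat.prime_five.dvd_mul.1 (hmul ▸ by omega)).resolve_right hfive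
  rw [hm] at hmul hmod ⊢
  have hm4 : m ∣ 4 := by
    rcases hcard with h | h <;> rw [h] at hmul
    · exact ⟨2 * k, by linarith⟩
    · exact ⟨k, by linarith⟩
  have := Nat.le_of_dvd four_pos hm4
  omega

theorem IsLine.card_eq_sixty {A : Subgroup G} (hA : IsLine A) : Nat.card A = 60 := by
  refine (hA.card_eq_thirty_or_sixty hG).resolve_left fun h ↦ ?_
  have hthree := ncard_orderOf_eq (r := 3) A
  have hfive := ncard_orderOf_eq (r := 5) A
  rw [hA.ncard_subgroupsOfOrder_three hG] at hthree
  rw [hA.ncard_points hG] at hfive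
  have hdisj : Disjoint {x | x ∈ A ∧ orderOf x = 3} {x | x ∈ A ∧ orderOf x = 5} :=
    Set.disjoint_left.2 fun x h3 h5 ↦ by have := h3.2.symm.trans h5.2; omega
  have hle : ({x | x ∈ A ∧ orderOf x = 3} ∪ {x | x ∈ A ∧ orderOf x = 5}).ncard ≤
      (A : Set G).ncard :=
    Set.ncard_le_ncard (Set.union_subset (fun x hx ↦ hx.1) fun x hx ↦ hx.1) (Set.toFinite _)
  rw [Set.ncard_union_eq hdisj, hthree, hfive, ← Nat.card_coe_set_eq (A : Set G)] at hle
  change 10 * 2 + 6 * 4 ≤ Nat.card A at hle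
  omega

theorem IsLine.eq_of_mem_points {A B P P' : Subgroup G} (hA : IsLine A) (hB : IsLine B)
    (hPA : P ∈ points A) (hPB : P ∈ points B) (hPA' : P' ∈ points A) (hPB' : P' ∈ points B)
    (hne : P ≠ P') : A = B := by
  have hAB : IsLine (A ⊓ B) := ⟨fun h ↦ hA.1 (top_le_iff.1 (h ▸ inf_le_left)),
    P, ⟨hPA.1, le_inf hPA.2 hPB.2⟩, P', ⟨hPA'.1, le_inf hPA'.2 hPB'.2⟩, hne⟩
  exact (Subgroup.eq_of_le_of_card_ge inf_le_left
    ((hA.card_eq_sixty hG).trans (hAB.card_eq_sixty hG).symm).le).symm.trans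
    (Subgroup.eq_of_le_of_card_ge inf_le_right
      ((hB.card_eq_sixty hG).trans (hAB.card_eq_sixty hG).symm).le)

theorem IsLine.normalizer_le {A P : Subgroup G} (hA : IsLine A) (hP : P ∈ points A) :
    Subgroup.normalizer (P : Set G) ≤ A := by
  have hmul := ncard_points_mul_card_normalizer hG hP
  rw [hA.ncard_points hG, hA.card_eq_sixty hG] at hmul
  rw [← inf_eq_right]
  refine Subgroup.eq_of_le_of_card_ge inf_le_right ?_
  rw [hA.card_normalizer hG hP.1]
  omega

theorem IsLine.eq_of_mem_conjugatesBy {A B P : Subgroup G} (hA : IsLine A)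
    (hB : B ∈ conjugatesBy ⊤ A) (hPA : P ∈ points A) (hPB : P ∈ points B) : B = A := by
  obtain ⟨g, -, rfl⟩ := hB
  have hP : MulAut.conj g⁻¹ • P ∈ points A := by
    simpa only [map_inv, inv_smul_smul] using smul_mem_subgroupsOfOrder (MulAut.conj g⁻¹) hPB
  obtain ⟨a, ha, hPa⟩ : P ∈ conjugatesBy A (MulAut.conj g⁻¹ • P) :=
    subgroupsOfOrder_eq_conjugatesBy (five_dvd_card_of_mem_points hPA)
      (not_five_sq_dvd_card hG A) hP ▸ hPA
  rw [← mul_smul, ← map_mul, ← mem_normalizer_iff_conj_smul_eq] at hPa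
  have hg := (Subgroup.mul_mem_cancel_left _ ha).1 (hA.normalizer_le hG hPA hPa)
  exact Subgroup.conj_smul_eq_self_of_mem (inv_mem_iff.1 hg)

theorem IsLine.normalizer_eq {A : Subgroup G} (hA : IsLine A) :
    Subgroup.normalizer (A : Set G) = A := by
  have hle := card_le_sixty hG (normalizer_ne_top hA.ne_bot hA.1)
  exact (Subgroup.eq_of_le_of_card_ge Subgroup.le_normalizer
    (hle.trans_eq (hA.card_eq_sixty hG).symm)).symm

theorem IsLine.ncard_conjugatesBy {A : Subgroup G} (hA : IsLine A) :
    (conjugatesBy ⊤ A).ncard = 6 := by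
  have hmul := ncard_conjugatesBy_mul_card ⊤ A
  rw [top_inf_eq, hA.normalizer_eq hG, hA.card_eq_sixty hG, Subgroup.card_top, hG] at hmul
  omega

omit [IsSimpleGroup G] in
theorem IsLine.exists_conj_mem_points {A P : Subgroup G} (hA : IsLine A) (hP : P ∈ points ⊤) :
    ∃ B ∈ conjugatesBy ⊤ A, P ∈ points B := by
  obtain ⟨P₀, hP₀⟩ := hA.2.nonempty
  obtain ⟨g, -, rfl⟩ : P ∈ conjugatesBy ⊤ P₀ :=
    subgroupsOfOrder_eq_conjugatesBy (five_dvd_card_of_mem_points hP)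
      (not_five_sq_dvd_card hG ⊤) (points_top hP₀) ▸ hP
  exact ⟨_, ⟨g, trivial, rfl⟩, smul_mem_subgroupsOfOrder _ hP₀⟩

/-- The six lines of the class of `B` through the six points of `A` are distinct, so they exhaust
the class. -/
theorem IsLine.exists_mem_points_inter {A B : Subgroup G} (hA : IsLine A) (hB : IsLine B)
    (hAB : A ∉ conjugatesBy ⊤ B) : ∃ P ∈ points A, P ∈ points B := by
  choose! b hb hbP using fun P (hP : P ∈ points A) ↦
    hB.exists_conj_mem_points hG (points_top hP)
  have hinj : Set.InjOn b (points A) := fun P hP P' hP' h ↦ by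
    by_contra hne
    refine hAB ?_
    rw [hA.eq_of_mem_points hG (hB.of_mem_conjugatesBy (hb P hP)) hP (hbP P hP) hP'
      (h ▸ hbP P' hP') hne]
    exact hb P hP
  have himage : b '' points A = conjugatesBy ⊤ B :=
    Set.eq_of_subset_of_ncard_le (Set.image_subset_iff.2 hb)
      (by rw [hinj.ncard_image, hA.ncard_points hG, hB.ncard_conjugatesBy hG]) (Set.toFinite _)
  obtain ⟨P, hP, rfl⟩ := himage ▸ self_mem_conjugatesBy ⊤ B
  exact ⟨P, hP, hbP P hP⟩

/-- An element of order `3` moves every point, so two lines through it that share a point share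
two. -/
theorem IsLine.mem_conjugatesBy_of_orderOf_three {A B : Subgroup G} (hA : IsLine A)
    (hB : IsLine B) {y : G} (hy : orderOf y = 3) (hyA : y ∈ A) (hyB : y ∈ B) :
    A ∈ conjugatesBy ⊤ B := by
  by_contra hAB
  obtain ⟨P, hPA, hPB⟩ := hA.exists_mem_points_inter hG hB hAB
  have hne : MulAut.conj y • P ≠ P :=
    mt mem_normalizer_iff_conj_smul_eq.2 (hA.notMem_normalizer_of_orderOf hG hPA.1 hy)
  refine hAB (hA.eq_of_mem_points hG hB ?_ ?_ hPA hPB hne ▸ self_mem_conjugatesBy _ _)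
  · exact mem_points_conj hyA hPA
  · exact mem_points_conj hyB hPB

theorem IsLine.index_eq_six {A : Subgroup G} (hA : IsLine A) : A.index = 6 := by
  have := A.index_mul_card
  rw [hA.card_eq_sixty hG, hG] at this
  omega

omit [Finite G] hG in
theorem IsLine.toPermHom_injective {A : Subgroup G} (hA : IsLine A) :
    Function.Injective (MulAction.toPermHom G (G ⧸ A)) := by
  rw [← MonoidHom.ker_eq_bot_iff, ← Subgroup.normalCore_eq_ker]
  exact normalCore_eq_bot hA.1

/-- The group embeds in the symmetric group on the six cosets of a line. -/
theorem IsLine.ncard_orderOf_three_le {A : Subgroup G} (hA : IsLine A) :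
    {y : G | orderOf y = 3}.ncard ≤ 80 := by
  classical
  have := Fintype.ofFinite (G ⧸ A)
  have hcard : Fintype.card (G ⧸ A) = 6 := Nat.card_eq_fintype_card.symm.trans (hA.index_eq_six hG)
  refine (Set.ncard_le_ncard_of_injOn (MulAction.toPermHom G (G ⧸ A)) (fun y hy ↦ ?_)
    hA.toPermHom_injective.injOn (Set.toFinite _)).trans (ncard_perm_orderOf_three_le hcard)
  exact (orderOf_injective _ hA.toPermHom_injective y).trans hy

/-- The conjugates of `A` through `y` correspond to the fixed points of `y` on the cosets of `A`. -/
theorem IsLine.ncard_conjugatesBy_through_le {A : Subgroup G} (hA : IsLine A) {y : G}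
    (hy : orderOf y = 3) : {B | B ∈ conjugatesBy ⊤ A ∧ y ∈ B}.ncard ≤ 3 := by
  classical
  have := Fintype.ofFinite (G ⧸ A)
  have hcard : Fintype.card (G ⧸ A) = 6 := Nat.card_eq_fintype_card.symm.trans (hA.index_eq_six hG)
  let σ := MulAction.toPermHom G (G ⧸ A) y
  have hσ : 3 ≤ σ.support.card :=
    three_le_card_support hcard ((orderOf_injective _ hA.toPermHom_injective y).trans hy)
  have hsub : {B | B ∈ conjugatesBy ⊤ A ∧ y ∈ B} ⊆
      (fun c : G ⧸ A ↦ MulAut.conj c.out • A) '' (σ.supportᶜ : Finset (G ⧸ A)) := by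
    rintro _ ⟨⟨g, -, rfl⟩, hyg⟩
    refine ⟨(g : G ⧸ A), ?_, ?_⟩
    · rw [Finset.mem_coe, Finset.mem_compl, Equiv.Perm.notMem_support]
      refine (QuotientGroup.eq.2 ?_).symm
      rw [Subgroup.mem_pointwise_smul_iff_inv_smul_mem, ← map_inv, MulAut.smul_def,
        MulAut.conj_apply, inv_inv] at hyg
      rwa [mul_assoc] at hyg
    · obtain ⟨a, ha⟩ := QuotientGroup.mk_out_eq_mul A g
      simp only [ha, map_mul, mul_smul, Subgroup.conj_smul_eq_self_of_mem a.2]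
  calc {B | B ∈ conjugatesBy ⊤ A ∧ y ∈ B}.ncard
      ≤ ((fun c : G ⧸ A ↦ MulAut.conj c.out • A) '' (σ.supportᶜ : Finset (G ⧸ A))).ncard :=
        Set.ncard_le_ncard hsub (Set.toFinite _)
    _ ≤ (σ.supportᶜ : Finset (G ⧸ A)).card :=
        (Set.ncard_image_le (Set.toFinite _)).trans_eq (Set.ncard_coe_finset _)
    _ ≤ 3 := by rw [Finset.card_compl, hcard]; omega

theorem IsLine.forty_le_ncard {A : Subgroup G} (hA : IsLine A) :
    40 ≤ {y : G | orderOf y = 3 ∧ ∃ B ∈ conjugatesBy ⊤ A, y ∈ B}.ncard := by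
  classical
  let lines := (conjugatesBy ⊤ A).toFinite.toFinset
  let elements := {y : G | orderOf y = 3 ∧ ∃ B ∈ conjugatesBy ⊤ A, y ∈ B}.toFinite.toFinset
  have hcount : lines.card * 20 ≤ elements.card * 3 := by
    refine Finset.card_mul_le_card_mul (fun B y ↦ y ∈ B) (fun B hB ↦ ?_) fun y hy ↦ ?_
    · rw [Set.Finite.mem_toFinset] at hB
      have htwenty := ncard_orderOf_eq (r := 3) B
      rw [(hA.of_mem_conjugatesBy hB).ncard_subgroupsOfOrder_three hG] at htwenty
      rw [← Set.ncard_coe_finset]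
      refine htwenty.symm.trans_le ?_
      refine Set.ncard_le_ncard (fun y hy ↦ ?_) (Set.toFinite _)
      exact (Finset.mem_bipartiteAbove _).2
        ⟨(Set.Finite.mem_toFinset _).2 ⟨hy.2, B, hB, hy.1⟩, hy.1⟩
    · rw [Set.Finite.mem_toFinset] at hy
      refine le_trans ?_ (hA.ncard_conjugatesBy_through_le hG hy.1)
      rw [← Set.ncard_coe_finset]
      refine Set.ncard_le_ncard (fun B hB ↦ ?_) (Set.toFinite _)
      rw [Finset.mem_coe, Finset.mem_bipartiteBelow, Set.Finite.mem_toFinset] at hB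
      exact hB
  rw [← Set.ncard_eq_toFinset_card, ← Set.ncard_eq_toFinset_card,
    hA.ncard_conjugatesBy hG] at hcount
  omega

theorem IsLine.disjoint_orderOf_three {A B : Subgroup G} (hA : IsLine A) (hB : IsLine B)
    (hAB : A ∉ conjugatesBy ⊤ B) :
    Disjoint {y : G | orderOf y = 3 ∧ ∃ L ∈ conjugatesBy ⊤ A, y ∈ L}
      {y : G | orderOf y = 3 ∧ ∃ L ∈ conjugatesBy ⊤ B, y ∈ L} := by
  rw [Set.disjoint_left]
  rintro y ⟨hy, L, hL, hyL⟩ ⟨-, L', hL', hyL'⟩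
  refine hAB ?_
  have h := (hA.of_mem_conjugatesBy hL).mem_conjugatesBy_of_orderOf_three hG
    (hB.of_mem_conjugatesBy hL') hy hyL hyL'
  rw [← conjugatesBy_top_eq_of_mem hL', ← conjugatesBy_top_eq_of_mem h,
    conjugatesBy_top_eq_of_mem hL]
  exact self_mem_conjugatesBy _ _

theorem IsLine.mem_conjugatesBy_or {A B C : Subgroup G} (hA : IsLine A) (hB : IsLine B)
    (hC : IsLine C) (hAB : A ∉ conjugatesBy ⊤ B) (hAC : A ∉ conjugatesBy ⊤ C) :
    B ∈ conjugatesBy ⊤ C := by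
  by_contra hBC
  have hsub := Set.ncard_le_ncard (s := {y : G | orderOf y = 3 ∧ ∃ L ∈ conjugatesBy ⊤ A, y ∈ L} ∪
    {y : G | orderOf y = 3 ∧ ∃ L ∈ conjugatesBy ⊤ B, y ∈ L} ∪
    {y : G | orderOf y = 3 ∧ ∃ L ∈ conjugatesBy ⊤ C, y ∈ L}) (t := {y : G | orderOf y = 3})
    (Set.union_subset (Set.union_subset (fun y hy ↦ hy.1) fun y hy ↦ hy.1) fun y hy ↦ hy.1)
    (Set.toFinite _)
  rw [Set.ncard_union_eq (Set.disjoint_union_left.2 ⟨hA.disjoint_orderOf_three hG hC hAC,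
      hB.disjoint_orderOf_three hG hC hBC⟩), Set.ncard_union_eq
      (hA.disjoint_orderOf_three hG hB hAB)] at hsub
  linarith [hA.forty_le_ncard hG, hB.forty_le_ncard hG, hC.forty_le_ncard hG,
    hA.ncard_orderOf_three_le hG]

omit [Finite G] [IsSimpleGroup G] hG in
theorem smul_eq_or_exists_isLine {κ : MulAut G} (hκ : ¬ HasPPGenerator κ) {P : Subgroup G}
    (hP : Nat.card P = 5) : κ • P = P ∨ ∃ M, IsLine M ∧ κ • M = M ∧ P ∈ points M := by
  obtain ⟨x, rfl⟩ := P.isCyclic_iff_exists_zpowers_eq_top.1 (isCyclic_of_prime_card hP)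
  have hx : IsPPElement x := by
    rw [IsPPElement, ← Nat.card_zpowers, hP]
    exact Nat.prime_five.isPrimePow
  rw [or_iff_not_imp_left]
  intro hne
  simp only [HasPPGenerator, not_exists, not_and, not_forall] at hκ
  obtain ⟨M, hxM, hκM, hM⟩ := hκ x hx
  have hmem : Subgroup.zpowers x ∈ points M := ⟨hP, Subgroup.zpowers_le.2 hxM⟩
  exact ⟨M, ⟨hM, _, hκM ▸ smul_mem_subgroupsOfOrder κ hmem, _, hmem, hne⟩, hκM, hmem⟩

theorem exists_smul_eq_isLine {κ : MulAut G} (hκ : ¬ HasPPGenerator κ) (hκ1 : κ ≠ 1) :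
    ∃ M : Subgroup G, IsLine M ∧ κ • M = M := by
  by_contra! hno
  obtain ⟨x, hx⟩ := exists_prime_orderOf_dvd_card' 5 (by rw [hG]; norm_num : 5 ∣ Nat.card G)
  have hP := zpowers_mem_subgroupsOfOrder hx (Subgroup.mem_top x)
  refine hκ1 (mulAut_eq_one_of_forall_smul_conj_smul (ne_bot_of_mem_points hP) (fun h ↦ ?_)
    fun g ↦ (smul_eq_or_exists_isLine hκ ((card_mulAut_smul _ _).trans hP.1)).resolve_right ?_)
  · have := hP.1
    rw [h, Subgroup.card_top, hG] at this
    omega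
  · rintro ⟨M, hM, hκM, -⟩
    exact hno M hM hκM

theorem IsLine.exists_smul_eq_isLine_notMem {κ : MulAut G} (hκ : ¬ HasPPGenerator κ)
    {A P : Subgroup G} (hA : IsLine A) (hκA : κ • A ∈ conjugatesBy ⊤ A) (hne : κ • A ≠ A)
    (hP : P ∈ points A) :
    ∃ B, IsLine B ∧ κ • B = B ∧ P ∈ points B ∧ A ∉ conjugatesBy ⊤ B := by
  rcases smul_eq_or_exists_isLine hκ hP.1 with h | ⟨B, hB, hκB, hPB⟩
  · exact absurd (hA.eq_of_mem_conjugatesBy hG hκA hP (h ▸ smul_mem_subgroupsOfOrder κ hP)) hne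
  · refine ⟨B, hB, hκB, hPB, fun hAB ↦ hne ?_⟩
    rwa [hB.eq_of_mem_conjugatesBy hG hAB hPB hP]

/-- If `κ` fixes a line but moves its conjugate `A`, each point of `A` must lie on a line of the
other class fixed by `κ`, so `κ` fixes that whole class. -/
theorem hasPPGenerator_of_card_eq_360 {κ : MulAut G} (hκ : κ ≠ 1) : HasPPGenerator κ := by
  by_contra hbad
  obtain ⟨M, hM, hκM⟩ := exists_smul_eq_isLine hG hbad hκ
  obtain ⟨g, hg⟩ : ∃ g : G, κ • MulAut.conj g • M ≠ MulAut.conj g • M := by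
    by_contra! h
    exact hκ (mulAut_eq_one_of_forall_smul_conj_smul hM.ne_bot hM.1 h)
  have hA := hM.mulAut_smul (MulAut.conj g)
  have hκA : κ • MulAut.conj g • M ∈ conjugatesBy ⊤ (MulAut.conj g • M) := by
    rw [conjugatesBy_top_eq_of_mem ⟨g, trivial, rfl⟩, mulAut_smul_conj_smul, hκM]
    exact ⟨κ g, trivial, rfl⟩
  obtain ⟨P, hP⟩ := hA.2.nonempty
  obtain ⟨B, hB, -, -, hAB⟩ := hA.exists_smul_eq_isLine_notMem hG hbad hκA hg hP
  refine hκ (mulAut_eq_one_of_forall_smul_conj_smul hB.ne_bot hB.1 fun b ↦ ?_)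
  have hC := hB.mulAut_smul (MulAut.conj b)
  have hBC : conjugatesBy ⊤ (MulAut.conj b • B) = conjugatesBy ⊤ B :=
    conjugatesBy_top_eq_of_mem ⟨b, trivial, rfl⟩
  rw [← hBC] at hAB
  obtain ⟨Q, hQA, hQC⟩ := hA.exists_mem_points_inter hG hC hAB
  obtain ⟨B', hB', hκB', hQB', hAB'⟩ := hA.exists_smul_eq_isLine_notMem hG hbad hκA hg hQA
  rw [← hC.eq_of_mem_conjugatesBy hG (hA.mem_conjugatesBy_or hG hB' hC hAB' hAB) hQC hQB', hκB']

end Order360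

section MoebiusActions

open MulAction

/-- An affine coordinate on the complement of `ω`, in which the stabilizer of `ω` acts by affine
maps `z ↦ slope g * z + offset g`; the model is `ω = ∞` on a projective line over `E`. -/
structure AffineChart (E L : Type*) {Ω : Type*} [Field E] [Group L] [MulAction L Ω] (ω : Ω) where
  point : E → Ω
  point_injective : Function.Injective point
  range_point : Set.range point = {ω}ᶜ
  slope : stabilizer L ω → E
  offset : stabilizer L ω → E
  smul_point : ∀ (g : stabilizer L ω) (z : E), (g : L) • point z = point (slope g * z + offset g)

/-- An action that looks like an action by Moebius transformations on a projective line over `E`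
containing all fixed points of the acting elements. -/
structure IsMoebiusAction (E L Ω : Type*) [Field E] [Group L] [MulAction L Ω] : Prop where
  nonempty_affineChart : ∀ ω : Ω, Nonempty (AffineChart E L ω)
  exists_smul_eq : ∀ g : L, ∃ ω : Ω, g • ω = ω

/-- The elements whose only fixed point is `ω`, together with the identity. -/
def unipotents (L : Type*) {Ω : Type*} [Group L] [MulAction L Ω] (ω : Ω) : Set L :=
  {g | g = 1 ∨ g • ω = ω ∧ ∀ η : Ω, g • η = η → η = ω}

theorem AffineChart.nonempty_of_forall_exists_smul_eq {E G L Ω : Type*} [Field E] [Group G]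
    [Group L] [MulAction G Ω] [MulAction L Ω] {ω : Ω} (c : AffineChart E L ω)
    (h : ∀ g : G, ∃ l : L, ∀ η : Ω, g • η = l • η) : Nonempty (AffineChart E G ω) := by
  choose φ hφ using h
  let ψ (g : stabilizer G ω) : stabilizer L ω := ⟨φ g, (hφ g ω).symm.trans g.2⟩
  exact ⟨⟨c.point, c.point_injective, c.range_point, c.slope ∘ ψ, c.offset ∘ ψ,
    fun g z ↦ (hφ g _).trans (c.smul_point (ψ g) z)⟩⟩

theorem IsMoebiusAction.subgroup {E L Ω : Type*} [Field E] [Group L] [MulAction L Ω]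
    (h : IsMoebiusAction E L Ω) (M : Subgroup L) : IsMoebiusAction E M Ω where
  nonempty_affineChart ω := by
    obtain ⟨c⟩ := h.nonempty_affineChart ω
    exact c.nonempty_of_forall_exists_smul_eq fun g ↦ ⟨g, fun _ ↦ rfl⟩
  exists_smul_eq g := h.exists_smul_eq g

namespace AffineChart

variable {E L Ω : Type*} [Field E] [Group L] [MulAction L Ω] {ω : Ω} (c : AffineChart E L ω)

theorem exists_point_eq {η : Ω} (hη : η ≠ ω) : ∃ z, c.point z = η :=
  c.range_point.symm.subset hη

theorem point_ne (z : E) : c.point z ≠ ω :=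
  c.range_point.subset (Set.mem_range_self z)

theorem smul_point_eq_iff (g : stabilizer L ω) (z : E) :
    (g : L) • c.point z = c.point z ↔ c.slope g * z + c.offset g = z := by
  rw [c.smul_point, c.point_injective.eq_iff]

theorem affine_mul (g g' : stabilizer L ω) (z : E) :
    c.slope (g * g') * z + c.offset (g * g') =
      c.slope g * (c.slope g' * z + c.offset g') + c.offset g := by
  apply c.point_injective
  rw [← c.smul_point, ← c.smul_point, ← c.smul_point, Subgroup.coe_mul, mul_smul]

theorem offset_mul (g g' : stabilizer L ω) :
    c.offset (g * g') = c.slope g * c.offset g' + c.offset g := by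
  simpa only [mul_zero, zero_add] using c.affine_mul g g' 0

theorem slope_mul (g g' : stabilizer L ω) : c.slope (g * g') = c.slope g * c.slope g' := by
  linear_combination c.affine_mul g g' 1 - c.offset_mul g g'

theorem offset_one : c.offset 1 = 0 := by
  simpa only [mul_zero, zero_add] using (c.smul_point_eq_iff 1 0).1 (one_smul L _)

theorem slope_one : c.slope 1 = 1 := by
  simpa only [mul_one, offset_one, add_zero] using (c.smul_point_eq_iff 1 1).1 (one_smul L _)

/-- The slope as a homomorphism to the multiplicative group of the field. -/
def slopeHom : stabilizer L ω →* Eˣ :=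
  MonoidHom.toHomUnits
    { toFun := c.slope
      map_one' := c.slope_one
      map_mul' := c.slope_mul }

theorem coe_slopeHom (g : stabilizer L ω) : (c.slopeHom g : E) = c.slope g := rfl

theorem mem_ker_slopeHom {g : stabilizer L ω} : g ∈ c.slopeHom.ker ↔ c.slope g = 1 := by
  rw [MonoidHom.mem_ker, Units.ext_iff, coe_slopeHom, Units.val_one]

theorem card_stabilizer :
    Nat.card (stabilizer L ω) = Nat.card c.slopeHom.ker * Nat.card c.slopeHom.range := by
  rw [mul_comm, ← Subgroup.index_ker, Subgroup.index_mul_card]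

section Faithful

variable [FaithfulSMul L Ω]

theorem eq_of_slope_eq_of_offset_eq {g g' : stabilizer L ω} (hs : c.slope g = c.slope g')
    (ho : c.offset g = c.offset g') : g = g' := by
  refine Subtype.ext (FaithfulSMul.eq_of_smul_eq_smul (α := Ω) fun η ↦ ?_)
  by_cases hη : η = ω
  · rw [hη, g.2, g'.2]
  · obtain ⟨z, rfl⟩ := c.exists_point_eq hη
    rw [c.smul_point, c.smul_point, hs, ho]

theorem injOn_offset_ker : Set.InjOn c.offset (c.slopeHom.ker : Set (stabilizer L ω)) :=
  fun _ hu _ hv huv ↦ c.eq_of_slope_eq_of_offset_eq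
    ((c.mem_ker_slopeHom.1 hu).trans (c.mem_ker_slopeHom.1 hv).symm) huv

/-- On elements of slope `1`, the offset is a homomorphism to the additive group of the field. -/
def offsetHom : c.slopeHom.ker →* Multiplicative E where
  toFun u := Multiplicative.ofAdd (c.offset u)
  map_one' := c.offset_one
  map_mul' u v := by
    rw [Subgroup.coe_mul, offset_mul, c.mem_ker_slopeHom.1 u.2, one_mul, add_comm, ofAdd_add]

theorem card_ker_slopeHom_dvd : Nat.card c.slopeHom.ker ∣ Nat.card E :=
  Subgroup.card_dvd_of_injective (H := Multiplicative E) c.offsetHom fun u v huv ↦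
    Subtype.ext (c.injOn_offset_ker u.2 v.2 huv)

theorem eq_of_smul_eq_of_slope_eq_one {g : stabilizer L ω} (hg : g ≠ 1) (hs : c.slope g = 1) {η : Ω}
    (hη : (g : L) • η = η) : η = ω := by
  by_contra hne
  obtain ⟨z, rfl⟩ := c.exists_point_eq hne
  rw [c.smul_point_eq_iff, hs, one_mul, add_eq_left] at hη
  exact hg (c.eq_of_slope_eq_of_offset_eq (hs.trans c.slope_one.symm) (hη.trans c.offset_one.symm))

end Faithful

theorem exists_fixedBy_eq_pair {g : stabilizer L ω} (hs : c.slope g ≠ 1) :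
    ∃ ω' ≠ ω, fixedBy Ω (g : L) = {ω, ω'} := by
  have hs' : 1 - c.slope g ≠ 0 := sub_ne_zero.2 hs.symm
  refine ⟨c.point (c.offset g / (1 - c.slope g)), c.point_ne _, Set.ext fun η ↦ ?_⟩
  by_cases hη : η = ω
  · rw [hη]
    exact iff_of_true g.2 (Set.mem_insert _ _)
  · obtain ⟨z, rfl⟩ := c.exists_point_eq hη
    rw [mem_fixedBy, c.smul_point_eq_iff, Set.mem_insert_iff, or_iff_right hη,
      Set.mem_singleton_iff, c.point_injective.eq_iff, eq_div_iff hs']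
    constructor <;> intro hz <;> linear_combination -hz

variable [FaithfulSMul L Ω]

theorem image_ker_slopeHom :
    Subtype.val '' (c.slopeHom.ker : Set (stabilizer L ω)) = unipotents L ω := by
  ext g
  constructor
  · rintro ⟨g, hg, rfl⟩
    refine or_iff_not_imp_left.2 fun hg1 ↦ ⟨g.2, fun η hη ↦ ?_⟩
    exact c.eq_of_smul_eq_of_slope_eq_one (fun h ↦ hg1 (congrArg _ h)) (c.mem_ker_slopeHom.1 hg) hη
  · rintro (rfl | ⟨hg, hfix⟩)
    · exact ⟨1, one_mem _, rfl⟩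
    · refine ⟨⟨g, hg⟩, c.mem_ker_slopeHom.2 ?_, rfl⟩
      by_contra hs
      obtain ⟨ω', hne, hω'⟩ := c.exists_fixedBy_eq_pair hs
      exact hne (hfix ω' (hω'.symm.subset (Set.mem_insert_of_mem _ rfl)))

theorem card_ker_slopeHom : Nat.card c.slopeHom.ker = (unipotents L ω).ncard := by
  rw [← c.image_ker_slopeHom, Set.ncard_image_of_injective _ Subtype.val_injective]
  rfl

/-- The nonzero translations, on which the group of slopes acts by multiplication. -/
def translations : SubMulAction c.slopeHom.range E where
  carrier := c.offset '' (c.slopeHom.ker \ {1})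
  smul_mem' := by
    rintro ⟨_, g, rfl⟩ _ ⟨u, ⟨hu, hu1⟩, rfl⟩
    refine ⟨g * u * g⁻¹, ⟨c.slopeHom.normal_ker.conj_mem u hu g, ?_⟩, ?_⟩
    · exact fun h ↦ hu1 (conj_eq_one_iff.1 h)
    · have hg : c.slope g * c.offset g⁻¹ + c.offset g = 0 := by
        rw [← offset_mul, mul_inv_cancel, offset_one]
      have hu : c.slope u = 1 := c.mem_ker_slopeHom.1 hu
      rw [offset_mul, offset_mul, slope_mul, hu, mul_one]
      change _ = c.slope g * c.offset u
      linear_combination hg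

theorem card_range_slopeHom_dvd :
    Nat.card c.slopeHom.range ∣ (unipotents L ω).ncard - 1 := by
  have hfree (v : c.translations) : stabilizer c.slopeHom.range v = ⊥ := by
    obtain ⟨_, u, ⟨hu, hu1⟩, rfl⟩ := v
    refine (Subgroup.eq_bot_iff_forall _).2 fun r hr ↦ Subtype.ext (Units.ext ?_)
    have hu0 : c.offset u ≠ 0 := fun h ↦
      hu1 (c.injOn_offset_ker hu (one_mem _) (h.trans c.offset_one.symm))
    exact mul_right_cancel₀ hu0 ((congrArg Subtype.val hr).trans (one_mul _).symm)
  have hcard : Nat.card c.translations = (unipotents L ω).ncard - 1 := by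
    change (c.offset '' (c.slopeHom.ker \ {1})).ncard = _
    rw [(c.injOn_offset_ker.mono Set.sdiff_subset).ncard_image,
      Set.ncard_sdiff_singleton_of_mem (one_mem c.slopeHom.ker), ← c.card_ker_slopeHom]
    rfl
  rw [← hcard, Nat.card_congr (selfEquivOrbitsQuotientProd hfree), Nat.card_prod]
  exact dvd_mul_left _ _

end AffineChart

/-- The excess of a point over a point with trivial stabilizer in Klein's count of fixed points,
where a fixed point counts twice if it is the only one. The truncated subtraction is harmless, see
`pointWeight_add_two`. -/
noncomputable def pointWeight (L : Type*) {Ω : Type*} [Group L] [MulAction L Ω] (ω : Ω) : ℕ :=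
  Nat.card (stabilizer L ω) + (unipotents L ω).ncard - 2

/-- The sum of the weights of the points of an orbit. -/
noncomputable def orbitWeight (L : Type*) {Ω : Type*} [Group L] [MulAction L Ω]
    (o : orbitRel.Quotient L Ω) : ℕ :=
  Nat.card o.orbit * pointWeight L o.out

theorem ncard_unipotents_pos {L Ω : Type*} [Group L] [Finite L] [MulAction L Ω] (ω : Ω) :
    0 < (unipotents L ω).ncard :=
  (Set.ncard_pos (Set.toFinite _)).2 ⟨1, .inl rfl⟩

theorem pointWeight_add_two {L Ω : Type*} [Group L] [Finite L] [MulAction L Ω] (ω : Ω) :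
    pointWeight L ω + 2 = Nat.card (stabilizer L ω) + (unipotents L ω).ncard := by
  have hQ := ncard_unipotents_pos (L := L) ω
  have hs : 0 < Nat.card (stabilizer L ω) := Nat.card_pos
  rw [pointWeight]
  omega

theorem unipotents_smul {L Ω : Type*} [Group L] [MulAction L Ω] (k : L) (ω : Ω) :
    unipotents L (k • ω) = MulAut.conj k '' unipotents L ω := by
  have hle (k : L) (ω : Ω) : MulAut.conj k '' unipotents L ω ⊆ unipotents L (k • ω) := by
    rintro _ ⟨g, hg, rfl⟩
    refine hg.imp (by rintro rfl; exact map_one _) fun ⟨hgω, hfix⟩ ↦ ⟨?_, fun η hη ↦ ?_⟩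
    · rw [MulAut.conj_apply, smul_smul, inv_mul_cancel_right, mul_smul, hgω]
    · rw [← hfix (k⁻¹ • η) ?_, smul_inv_smul]
      rwa [MulAut.conj_apply, mul_smul, mul_smul, smul_eq_iff_eq_inv_smul] at hη
  refine (hle k ω).antisymm' fun g hg ↦ ⟨k⁻¹ * g * k, ?_, by simp [mul_assoc]⟩
  simpa using hle k⁻¹ (k • ω) ⟨g, hg, rfl⟩

theorem pointWeight_smul {L Ω : Type*} [Group L] [MulAction L Ω] (k : L) (ω : Ω) :
    pointWeight L (k • ω) = pointWeight L ω := by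
  rw [pointWeight, pointWeight, unipotents_smul,
    Set.ncard_image_of_injective _ (MulAut.conj k).injective,
    Nat.card_congr (stabilizerEquivStabilizer (g := k) rfl).symm.toEquiv]

theorem orbitWeight_mk {L Ω : Type*} [Group L] [MulAction L Ω] (ω : Ω) :
    orbitWeight L (Quotient.mk'' ω : orbitRel.Quotient L Ω) =
      Nat.card (orbit L ω) * pointWeight L ω := by
  obtain ⟨k, hk⟩ : (Quotient.mk'' ω : orbitRel.Quotient L Ω).out ∈ orbit L ω :=
    orbitRel_apply.1 (Quotient.mk_out ω)
  rw [orbitWeight, ← hk, orbitRel.Quotient.orbit_mk]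
  exact congrArg _ (pointWeight_smul k ω)

theorem sum_orbitWeight {L Ω : Type*} [Group L] [MulAction L Ω] [Fintype Ω]
    [Fintype (orbitRel.Quotient L Ω)] :
    ∑ o : orbitRel.Quotient L Ω, orbitWeight L o = ∑ ω : Ω, pointWeight L ω := by
  classical
  rw [← Finset.sum_fiberwise Finset.univ (Quotient.mk'' : Ω → orbitRel.Quotient L Ω)]
  refine Finset.sum_congr rfl fun o _ ↦ ?_
  induction o using Quotient.inductionOn' with | h ω => ?_
  have hmem (η : Ω) : (Quotient.mk'' η : orbitRel.Quotient L Ω) = Quotient.mk'' ω ↔ η ∈ orbit L ω :=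
    Quotient.eq''
  rw [orbitWeight_mk, ← smul_eq_mul, Nat.card_eq_card_toFinset, ← Finset.sum_const]
  refine Finset.sum_congr (by ext η; simp [hmem]) fun η hη ↦ ?_
  obtain ⟨k, rfl⟩ := (hmem η).1 (Finset.mem_filter.1 hη).2
  exact (pointWeight_smul k ω).symm

namespace IsMoebiusAction

variable {E L Ω : Type*} [Field E] [Group L] [MulAction L Ω] [FaithfulSMul L Ω]
  (h : IsMoebiusAction E L Ω)
include h

theorem isCyclic_stabilizer [Finite E] {ω : Ω} (hQ : (unipotents L ω).ncard = 1) :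
    IsCyclic (stabilizer L ω) := by
  obtain ⟨c⟩ := h.nonempty_affineChart ω
  rw [← c.card_ker_slopeHom, Subgroup.card_eq_one] at hQ
  exact isCyclic_of_injective c.slopeHom ((MonoidHom.ker_eq_bot_iff _).1 hQ)

theorem card_stabilizer_eq [Finite E] (p : ℕ) [CharP E p] (ω : Ω) :
    ∃ a m : ℕ, (unipotents L ω).ncard = p ^ a ∧
      Nat.card (stabilizer L ω) = (unipotents L ω).ncard * m ∧
      m ∣ (unipotents L ω).ncard - 1 ∧ m.Coprime p := by
  obtain ⟨c⟩ := h.nonempty_affineChart ω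
  cases nonempty_fintype E
  obtain ⟨n, hp, hn⟩ := FiniteField.card E p
  rw [← Nat.card_eq_fintype_card] at hn
  obtain ⟨a, -, ha⟩ := (Nat.dvd_prime_pow hp).1 (hn ▸ c.card_ker_slopeHom_dvd)
  refine ⟨a, Nat.card c.slopeHom.range, c.card_ker_slopeHom ▸ ha,
    c.card_ker_slopeHom ▸ c.card_stabilizer, c.card_range_slopeHom_dvd,
    .coprime_dvd_left (Subgroup.card_subgroup_dvd_card _) ?_⟩
  have hcop : (p ^ (n : ℕ) - 1).Coprime (p ^ (n : ℕ)) :=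
    Nat.coprime_self_sub_left (Nat.one_le_pow _ _ hp.pos) |>.2 (Nat.coprime_one_left _)
  rw [Nat.card_units, hn]
  exact hcop.coprime_dvd_right (dvd_pow_self p n.ne_zero)

theorem ncard_fixedBy_add_ncard {g : L} (hg : g ≠ 1) :
    (fixedBy Ω g).ncard + {ω : Ω | g ∈ unipotents L ω}.ncard = 2 := by
  obtain ⟨ω, hω⟩ := h.exists_smul_eq g
  obtain ⟨c⟩ := h.nonempty_affineChart ω
  have hunip (η : Ω) : g ∈ unipotents L η ↔ fixedBy Ω g = {η} := by
    rw [unipotents, Set.mem_ofPred_eq, or_iff_right hg, Set.eq_singleton_iff_unique_mem]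
    rfl
  by_cases hs : c.slope ⟨g, hω⟩ = 1
  · have hfix : fixedBy Ω g = {ω} := Set.eq_singleton_iff_unique_mem.2 ⟨hω, fun η hη ↦
      c.eq_of_smul_eq_of_slope_eq_one (fun h ↦ hg (congrArg Subtype.val h)) hs hη⟩
    simp only [hunip, hfix, Set.singleton_eq_singleton_iff, Set.ofPred_eq_eq_singleton',
      Set.ncard_singleton]
  · obtain ⟨ω', hne, hfix⟩ := c.exists_fixedBy_eq_pair hs
    have hno (η : Ω) : fixedBy Ω g ≠ {η} := fun hη ↦ hne <|
      (Set.mem_singleton_iff.1 (hη.subset (hfix.symm.subset (.inr rfl)))).trans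
        (Set.mem_singleton_iff.1 (hη.subset hω)).symm
    simp only [hunip, hno, Set.ofPred_false, Set.ncard_empty]
    rw [hfix, Set.ncard_pair hne.symm]

theorem sum_pointWeight [Finite L] [Fintype Ω] :
    ∑ ω : Ω, pointWeight L ω + 2 = 2 * Nat.card L := by
  classical
  cases nonempty_fintype L
  have hcomm (r : Ω → L → Prop) : ∑ ω, {g | r ω g}.ncard = ∑ g, {ω | r ω g}.ncard := by
    simp only [Set.ncard_eq_toFinset_card', Set.toFinset_ofPred]
    exact Finset.sum_card_bipartiteAbove_eq_sum_card_bipartiteBelow r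
  have hsum : ∑ ω : Ω, (pointWeight L ω + 2) =
      ∑ g : L, ((fixedBy Ω g).ncard + {ω : Ω | g ∈ unipotents L ω}.ncard) := by
    simp only [pointWeight_add_two, Finset.sum_add_distrib]
    exact congrArg₂ _ (hcomm fun ω g ↦ g • ω = ω) (hcomm fun ω g ↦ g ∈ unipotents L ω)
  have hone : (fixedBy Ω (1 : L)).ncard + {ω : Ω | 1 ∈ unipotents L ω}.ncard =
      2 * Fintype.card Ω := by
    simp [unipotents, two_mul]
  have hcard : (Finset.univ.erase (1 : L)).card + 1 = Nat.card L := by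
    rw [Finset.card_erase_add_one (Finset.mem_univ _), Finset.card_univ, Nat.card_eq_fintype_card]
  rw [Finset.sum_add_distrib, ← Finset.add_sum_erase _ _ (Finset.mem_univ (1 : L)), hone,
    Finset.sum_congr rfl fun g hg ↦ h.ncard_fixedBy_add_ncard (Finset.ne_of_mem_erase hg)] at hsum
  simp only [Finset.sum_const, smul_eq_mul, Finset.card_univ] at hsum
  omega

section Orbits

variable [Finite L] [Finite Ω]

theorem sum_orbitWeight_add_two_le (A : Finset (orbitRel.Quotient L Ω)) :
    ∑ o ∈ A, orbitWeight L o + 2 ≤ 2 * Nat.card L := by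
  cases nonempty_fintype Ω
  cases nonempty_fintype (orbitRel.Quotient L Ω)
  rw [← h.sum_pointWeight, ← sum_orbitWeight]
  exact Nat.add_le_add_right (Finset.sum_le_sum_of_subset (Finset.subset_univ A)) 2

theorem exists_notMem_orbitWeight_pos {A : Finset (orbitRel.Quotient L Ω)}
    (hA : ∑ o ∈ A, orbitWeight L o + 2 ≠ 2 * Nat.card L) :
    ∃ ω : Ω, Quotient.mk'' ω ∉ A ∧ 0 < orbitWeight L (Quotient.mk'' ω : orbitRel.Quotient L Ω) := by
  cases nonempty_fintype Ω
  cases nonempty_fintype (orbitRel.Quotient L Ω)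
  contrapose! hA
  rw [← h.sum_pointWeight, ← sum_orbitWeight, Finset.sum_subset (Finset.subset_univ A)]
  intro o _ ho
  induction o using Quotient.inductionOn' with | h ω => exact Nat.le_zero.1 (hA ω ho)

end Orbits

end IsMoebiusAction

end MoebiusActions

section OrbitCounting

open MulAction

section OrbitWeights

variable {L Ω : Type*} [Group L] [MulAction L Ω]

theorem card_orbit_mul_card_stabilizer (ω : Ω) :
    Nat.card (orbit L ω) * Nat.card (stabilizer L ω) = Nat.card L := by
  rw [Nat.card_coe_set_eq, ← index_stabilizer, mul_comm, Subgroup.card_mul_index]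

variable [Finite L]

theorem card_orbit_pos (ω : Ω) : 0 < Nat.card (orbit L ω) :=
  Nat.pos_of_mul_pos_right (card_orbit_mul_card_stabilizer (L := L) ω ▸ Nat.card_pos)

theorem orbitWeight_mk_add (ω : Ω) :
    orbitWeight L (Quotient.mk'' ω : orbitRel.Quotient L Ω) + Nat.card (orbit L ω) * 2 =
      Nat.card L + Nat.card (orbit L ω) * (unipotents L ω).ncard := by
  rw [orbitWeight_mk, ← mul_add, pointWeight_add_two, mul_add, card_orbit_mul_card_stabilizer]

theorem card_le_orbitWeight {ω : Ω} (hQ : 2 ≤ (unipotents L ω).ncard) :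
    Nat.card L ≤ orbitWeight L (Quotient.mk'' ω : orbitRel.Quotient L Ω) := by
  have hW := orbitWeight_mk_add (L := L) ω
  have := Nat.mul_le_mul_left (Nat.card (orbit L ω)) hQ
  omega

theorem orbitWeight_mk_add_card_orbit {ω : Ω} (hQ : (unipotents L ω).ncard = 1) :
    orbitWeight L (Quotient.mk'' ω : orbitRel.Quotient L Ω) + Nat.card (orbit L ω) =
      Nat.card L := by
  have hW := orbitWeight_mk_add (L := L) ω
  rw [hQ] at hW
  omega

theorem two_le_card_stabilizer {ω : Ω} (hQ : (unipotents L ω).ncard = 1)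
    (hW : 0 < orbitWeight L (Quotient.mk'' ω : orbitRel.Quotient L Ω)) :
    2 ≤ Nat.card (stabilizer L ω) := by
  have h2 := pointWeight_add_two (L := L) ω
  have : 0 < pointWeight L ω := Nat.pos_of_mul_pos_left (orbitWeight_mk (L := L) ω ▸ hW)
  omega

theorem card_le_two_mul_orbitWeight {ω : Ω}
    (hW : 0 < orbitWeight L (Quotient.mk'' ω : orbitRel.Quotient L Ω)) :
    Nat.card L ≤ 2 * orbitWeight L (Quotient.mk'' ω : orbitRel.Quotient L Ω) := by
  rcases (Nat.succ_le_of_lt (ncard_unipotents_pos (L := L) ω)).eq_or_lt' with hQ | hQ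
  · have hN := Nat.mul_le_mul_left (Nat.card (orbit L ω)) (two_le_card_stabilizer hQ hW)
    rw [card_orbit_mul_card_stabilizer] at hN
    have := orbitWeight_mk_add_card_orbit hQ
    omega
  · have := card_le_orbitWeight hQ
    omega

end OrbitWeights

theorem eq_two_of_mul_add_eq {v k d j m : ℕ} (hv : 0 < v) (hk : 0 < k) (hm : m * j = v + 1)
    (hmd : 7 ≤ m + d) (h : d * (2 + k * v) = 2 * k * m) : k = 2 ∧ d * j = 2 := by
  have hdj : d * j * (2 + k * v) = 2 * k * (v + 1) := by
    rw [← hm, mul_right_comm, h, mul_assoc]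
  have hkv : k ≤ k * v := Nat.le_mul_of_pos_right k hv
  have hlt : d * j < 4 := by
    by_contra! hle
    have := Nat.mul_le_mul_right (2 + k * v) hle
    linarith
  generalize he : d * j = e at *
  interval_cases e
  · nlinarith
  · nlinarith
  · exact ⟨by linarith, rfl⟩
  · obtain rfl : v = 1 := by nlinarith
    have hd := Nat.dvd_gcd (Dvd.intro_left m hm) (Dvd.intro_left d he)
    obtain rfl := Nat.dvd_one.1 hd
    omega

/-- In Klein's count, `g` is the order of the group, `N` is the size of a parabolic orbit, whose
points have `Q` unipotents and stabilizers of order `Q * m`, and `c` is the order of the stabilizer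
of an elliptic point, whose orbit has size `2 + N * (Q - 2)`. -/
theorem parabolic_arithmetic {g Q m N c : ℕ} (hQ : 2 ≤ Q) (hm : m ∣ Q - 1) (hcop : Q.Coprime c)
    (hc : 7 ≤ c) (hN : 0 < N) (hg : g = N * (Q * m)) (hgc : g = (2 + N * (Q - 2)) * c) :
    g = 2 * c ∨ c ∣ Q - 1 ∨ c ∣ Q + 1 ∧ (Q + 1) * Q * (Q - 1) ≤ 2 * g := by
  obtain ⟨v, rfl⟩ := Nat.exists_eq_add_of_le' hQ
  simp only [Nat.add_sub_cancel, show v + 2 - 1 = v + 1 by omega] at *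
  obtain ⟨M, rfl⟩ : ∃ M, N = M + 1 := ⟨N - 1, by omega⟩
  have hdvd : v + 2 ∣ 2 * M := by
    have h1 : v + 2 ∣ 2 + (M + 1) * v := by
      refine hcop.dvd_of_dvd_mul_right ?_
      rw [← hgc, hg, mul_left_comm]
      exact dvd_mul_right _ _
    have h2 : 2 + (M + 1) * v + 2 * M = (v + 2) * (M + 1) := by ring
    exact (Nat.dvd_add_right h1).1 (h2 ▸ dvd_mul_right _ _)
  obtain ⟨k, hk⟩ := hdvd
  obtain ⟨j, hj⟩ := hm
  have hmc : m * (2 + k * (v + 2)) = c * (2 + k * v) := by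
    have : (v + 2) * (m * (2 + k * (v + 2))) = (v + 2) * (c * (2 + k * v)) := by
      have := hg.symm.trans hgc
      zify at *
      linear_combination 2 * this + hk * (c * v - (v + 2) * m : ℤ)
    exact Nat.eq_of_mul_eq_mul_left (by omega) this
  rcases Nat.eq_zero_or_pos k with rfl | hk0
  · obtain rfl : m = c := by omega
    exact .inr (.inl ⟨j, hj⟩)
  rcases Nat.eq_zero_or_pos v with rfl | hv
  · exact .inl hgc
  have hle : m ≤ c := by
    by_contra! hlt
    have := Nat.mul_le_mul_right (2 + k * v) hlt.le
    nlinarith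
  obtain ⟨d, rfl⟩ := Nat.exists_eq_add_of_le hle
  have hdm : d * (2 + k * v) = 2 * k * m := by linarith
  obtain ⟨rfl, hdj⟩ := eq_two_of_mul_add_eq hv hk0 hj.symm hc hdm
  obtain rfl : M = v + 2 := by omega
  refine .inr (.inr ⟨⟨j, by linarith⟩, ?_⟩)
  have hj2 : j ≤ 2 := Nat.le_of_dvd two_pos (Dvd.intro_left d hdj)
  calc (v + 2 + 1) * (v + 2) * (v + 1) = (v + 2 + 1) * (v + 2) * m * j := by rw [hj]; ring
    _ ≤ (v + 2 + 1) * (v + 2) * m * 2 := Nat.mul_le_mul_left _ hj2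
    _ = 2 * g := by rw [hg]; ring

theorem elliptic_arithmetic {g N₀ N₁ N₂ c s₁ s₂ : ℕ} (hc : 7 ≤ c) (hs₁ : 2 ≤ s₁)
    (hs₂ : 2 ≤ s₂) (h₀ : N₀ * c = g) (h₁ : N₁ * s₁ = g) (h₂ : N₂ * s₂ = g)
    (hsum : N₀ + N₁ + N₂ = g + 2) : g = 2 * c := by
  have hle {N s t : ℕ} (h : N * s = g) (hts : t ≤ s) : N * t ≤ g := h ▸ Nat.mul_le_mul_left N hts
  have h₀' := hle h₀ hc
  have h₁' := hle h₁ hs₁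
  have h₂' := hle h₂ hs₂
  obtain rfl : s₁ = 2 := by
    by_contra hne
    have := hle h₁ (show 3 ≤ s₁ by omega)
    omega
  obtain rfl : s₂ = 2 := by
    by_contra hne
    have := hle h₂ (show 3 ≤ s₂ by omega)
    omega
  obtain rfl : N₀ = 2 := by omega
  exact h₀.symm

namespace IsMoebiusAction

variable {E L Ω : Type*} [Field E] [Group L] [MulAction L Ω] [FaithfulSMul L Ω] [Finite L]
  [Finite Ω] (h : IsMoebiusAction E L Ω)
include h

section Elliptic

variable {ω₀ : Ω} (hc : 7 ≤ Nat.card (stabilizer L ω₀))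
include hc

theorem card_orbit_add_eq_of_parabolic (hQ₀ : (unipotents L ω₀).ncard = 1) {ω₁ : Ω}
    (hQ₁ : 2 ≤ (unipotents L ω₁).ncard) :
    Nat.card (orbit L ω₀) + 2 * Nat.card (orbit L ω₁) =
      2 + Nat.card (orbit L ω₁) * (unipotents L ω₁).ncard := by
  classical
  have hW₀ := orbitWeight_mk_add_card_orbit hQ₀
  have hW₁ := orbitWeight_mk_add (L := L) ω₁
  have hle := card_le_orbitWeight hQ₁
  have hN₀ := Nat.mul_le_mul_left (Nat.card (orbit L ω₀)) hc
  rw [card_orbit_mul_card_stabilizer] at hN₀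
  have hN₀_pos := card_orbit_pos (L := L) ω₀
  have hne : (Quotient.mk'' ω₀ : orbitRel.Quotient L Ω) ≠ Quotient.mk'' ω₁ := by
    intro heq
    rw [heq] at hW₀
    omega
  by_contra hcontra
  obtain ⟨ω, hω, hpos⟩ := h.exists_notMem_orbitWeight_pos
    (A := {Quotient.mk'' ω₀, Quotient.mk'' ω₁}) (by rw [Finset.sum_pair hne]; omega)
  have hsum := h.sum_orbitWeight_add_two_le {Quotient.mk'' ω, Quotient.mk'' ω₀, Quotient.mk'' ω₁}
  rw [Finset.sum_insert hω, Finset.sum_pair hne] at hsum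
  have := card_le_two_mul_orbitWeight hpos
  omega

theorem card_eq_of_forall_ncard_unipotents (hQ : ∀ ω : Ω, (unipotents L ω).ncard = 1) :
    Nat.card L = Nat.card (stabilizer L ω₀) ∨ Nat.card L = 2 * Nat.card (stabilizer L ω₀) := by
  classical
  have hWN (ω : Ω) := orbitWeight_mk_add_card_orbit (hQ ω)
  have hNs (ω : Ω) := card_orbit_mul_card_stabilizer (L := L) ω
  have hN₀ := hNs ω₀ ▸ Nat.mul_le_mul_left (Nat.card (orbit L ω₀)) hc
  have hN₀_pos := card_orbit_pos (L := L) ω₀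
  refine or_iff_not_imp_left.2 fun hne ↦ ?_
  have hN₀_ne : Nat.card (orbit L ω₀) ≠ 1 := fun h1 ↦ hne (by rw [← hNs ω₀, h1, one_mul])
  have := hWN ω₀
  obtain ⟨ω₁, h₁, hpos₁⟩ := h.exists_notMem_orbitWeight_pos (A := {Quotient.mk'' ω₀})
    (by rw [Finset.sum_singleton]; omega)
  have := card_le_two_mul_orbitWeight hpos₁
  have hN₁_pos := card_orbit_pos (L := L) ω₁
  have := hWN ω₁
  obtain ⟨ω₂, h₂, hpos₂⟩ := h.exists_notMem_orbitWeight_pos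
    (A := {Quotient.mk'' ω₁, Quotient.mk'' ω₀})
    (by rw [Finset.sum_insert h₁, Finset.sum_singleton]; omega)
  have := card_le_two_mul_orbitWeight hpos₂
  have := hWN ω₂
  refine elliptic_arithmetic hc (two_le_card_stabilizer (hQ ω₁) hpos₁)
    (two_le_card_stabilizer (hQ ω₂) hpos₂) (hNs ω₀) (hNs ω₁) (hNs ω₂) ?_
  by_contra hcontra
  obtain ⟨ω₃, h₃, hpos₃⟩ := h.exists_notMem_orbitWeight_pos
    (A := {Quotient.mk'' ω₂, Quotient.mk'' ω₁, Quotient.mk'' ω₀})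
    (by rw [Finset.sum_insert h₂, Finset.sum_insert h₁, Finset.sum_singleton]; omega)
  have := card_le_two_mul_orbitWeight hpos₃
  have hsum := h.sum_orbitWeight_add_two_le
    {Quotient.mk'' ω₃, Quotient.mk'' ω₂, Quotient.mk'' ω₁, Quotient.mk'' ω₀}
  rw [Finset.sum_insert h₃, Finset.sum_insert h₂, Finset.sum_insert h₁,
    Finset.sum_singleton] at hsum
  omega

theorem card_eq_or_exists_parabolic [Finite E] (hQ₀ : (unipotents L ω₀).ncard = 1) :
    Nat.card L = Nat.card (stabilizer L ω₀) ∨ Nat.card L = 2 * Nat.card (stabilizer L ω₀) ∨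
      ∃ ω : Ω, 2 ≤ (unipotents L ω).ncard ∧
        (Nat.card (stabilizer L ω₀) ∣ (unipotents L ω).ncard - 1 ∨
          Nat.card (stabilizer L ω₀) ∣ (unipotents L ω).ncard + 1 ∧
            ((unipotents L ω).ncard + 1) * (unipotents L ω).ncard * ((unipotents L ω).ncard - 1) ≤
              2 * Nat.card L) := by
  by_cases hQ : ∀ ω : Ω, (unipotents L ω).ncard = 1
  · exact (h.card_eq_of_forall_ncard_unipotents hc hQ).imp_right .inl
  right
  push Not at hQ
  obtain ⟨ω, hω⟩ := hQ
  have hQ : 2 ≤ (unipotents L ω).ncard := by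
    have := ncard_unipotents_pos (L := L) ω
    omega
  obtain ⟨p, _⟩ := CharP.exists E
  obtain ⟨a, m, hpa, hcard, hm, -⟩ := h.card_stabilizer_eq p ω
  obtain ⟨a₀, m₀, -, hcard₀, -, hcop₀⟩ := h.card_stabilizer_eq p ω₀
  rw [hQ₀, one_mul] at hcard₀
  have hcop : (unipotents L ω).ncard.Coprime (Nat.card (stabilizer L ω₀)) := by
    rw [hpa, hcard₀]
    exact hcop₀.symm.pow_left a
  have hN := h.card_orbit_add_eq_of_parabolic hc hQ₀ hQ
  have hN₀ : Nat.card (orbit L ω₀) =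
      2 + Nat.card (orbit L ω) * ((unipotents L ω).ncard - 2) := by
    have := Nat.mul_le_mul_left (Nat.card (orbit L ω)) hQ
    rw [Nat.mul_sub]
    omega
  refine (parabolic_arithmetic hQ hm hcop hc (card_orbit_pos (L := L) ω) ?_ ?_).imp_right
    fun hdvd ↦ ⟨ω, hQ, hdvd⟩
  · rw [← hcard, card_orbit_mul_card_stabilizer]
  · rw [← hN₀, card_orbit_mul_card_stabilizer]

end Elliptic

theorem exists_stabilizer_eq_top {r : ℕ} [Fact r.Prime] (hr : r ≠ 2) (hL : IsPGroup r L)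
    (hQ : ∀ ω : Ω, (unipotents L ω).ncard = 1) : ∃ ω : Ω, stabilizer L ω = ⊤ := by
  cases nonempty_fintype Ω
  cases nonempty_fintype (orbitRel.Quotient L Ω)
  by_contra! hno
  have hdvd_orbit (ω : Ω) : r ∣ Nat.card (orbit L ω) := by
    obtain ⟨i, hi⟩ := hL.card_orbit ω
    refine hi ▸ dvd_pow_self r fun h0 ↦ hno ω (Subgroup.index_eq_one.1 ?_)
    rw [index_stabilizer, ← Nat.card_coe_set_eq, hi, h0, pow_zero]
  have hdvd_card (ω : Ω) : r ∣ Nat.card L :=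
    (hdvd_orbit ω).trans (Dvd.intro _ (card_orbit_mul_card_stabilizer ω))
  have hdvd_weight (o : orbitRel.Quotient L Ω) : r ∣ orbitWeight L o := by
    induction o using Quotient.inductionOn' with | h ω => ?_
    rw [Nat.dvd_add_left (hdvd_orbit ω) |>.symm, orbitWeight_mk_add_card_orbit (hQ ω)]
    exact hdvd_card ω
  obtain ⟨ω, -⟩ := h.exists_smul_eq 1
  have hsum := h.sum_pointWeight
  rw [← sum_orbitWeight] at hsum
  have hdvd_two : r ∣ 2 := (Nat.dvd_add_right (Finset.dvd_sum fun o _ ↦ hdvd_weight o)).1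
    (hsum ▸ (hdvd_card ω).mul_left 2)
  exact hr ((Nat.prime_dvd_prime_iff_eq Fact.out Nat.prime_two).1 hdvd_two)

variable [Finite E] (p : ℕ) [Fact p.Prime] [CharP E p]

theorem exists_orderOf_eq_prime_pow {r j : ℕ} [Fact r.Prime] (hr : r ≠ 2) (hrp : r ≠ p)
    (hdvd : r ^ j ∣ Nat.card L) : ∃ x : L, orderOf x = r ^ j := by
  obtain ⟨R, hR⟩ := Sylow.exists_subgroup_card_pow_prime r hdvd
  have hM := h.subgroup R
  have hQ (ω : Ω) : (unipotents R ω).ncard = 1 := by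
    obtain ⟨a, m, ha, hm, -⟩ := hM.card_stabilizer_eq p ω
    have hdvd : p ^ a ∣ r ^ j := by
      rw [← ha, ← hR]
      exact (Dvd.intro m hm.symm).trans (Subgroup.card_subgroup_dvd_card _)
    rw [ha]
    exact Nat.eq_one_of_dvd_coprimes (Nat.coprime_pow_primes a j Fact.out Fact.out hrp.symm)
      dvd_rfl hdvd
  obtain ⟨ω, hω⟩ := hM.exists_stabilizer_eq_top hr (.of_card hR) hQ
  have := hM.isCyclic_stabilizer (hQ ω)
  obtain ⟨x, hx⟩ := IsCyclic.exists_ofOrder_eq_natCard (α := stabilizer R ω)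
  exact ⟨x, by rw [Subgroup.orderOf_coe, Subgroup.orderOf_coe, hx, hω, Subgroup.card_top, hR]⟩

end IsMoebiusAction

theorem mem_of_odd_orderOf_of_index_two {G : Type*} [Group G] {A : Subgroup G} (hA : A.index = 2)
    {x : G} (hx : Odd (orderOf x)) : x ∈ A := by
  obtain ⟨k, hk⟩ := hx
  have hpow : (x * x) ^ (k + 1) = x := by
    rw [← pow_two, ← pow_mul, mul_add, mul_one, pow_succ, ← hk, pow_orderOf_eq_one, one_mul]
  exact hpow ▸ A.pow_mem (Subgroup.mul_self_mem_of_index_two hA x) _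

theorem mem_zpowers_iff_pow_orderOf_eq_one {G : Type*} [Group G] [Finite G] [IsCyclic G] {x y : G} :
    y ∈ Subgroup.zpowers x ↔ y ^ orderOf x = 1 := by
  classical
  cases nonempty_fintype G
  have hsub : (Subgroup.zpowers x : Set G).toFinset ⊆ ({a : G | a ^ orderOf x = 1} : Finset G) := by
    intro a ha
    obtain ⟨k, rfl⟩ := Set.mem_toFinset.1 ha
    rw [Finset.mem_filter_univ, ← zpow_natCast, zpow_comm, zpow_natCast, pow_orderOf_eq_one,
      one_zpow]
  have hcard : (Subgroup.zpowers x : Set G).toFinset.card = orderOf x := by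
    rw [Set.toFinset_card]
    exact Fintype.card_zpowers
  have heq := Finset.eq_of_subset_of_card_le hsub
    ((IsCyclic.card_pow_eq_one_le (orderOf_pos x)).trans_eq hcard.symm)
  rw [← SetLike.mem_coe, ← Set.mem_toFinset, heq, Finset.mem_filter_univ]

theorem zpowers_eq_zpowers_of_zpowers_mk_eq {G : Type*} [Group G] {A : Subgroup G} {x y : G}
    {hx : x ∈ A} {hy : y ∈ A}
    (h : Subgroup.zpowers (⟨x, hx⟩ : A) = Subgroup.zpowers ⟨y, hy⟩) :
    Subgroup.zpowers x = Subgroup.zpowers y := by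
  simpa only [MonoidHom.map_zpowers, Subgroup.subtype_apply] using
    congrArg (Subgroup.map A.subtype) h

theorem zpowers_eq_zpowers_of_mem_of_isCyclic {G : Type*} [Group G] [Finite G] {A : Subgroup G}
    [IsCyclic A] {x y : G} (hx : x ∈ A) (hy : y ∈ A) (hxy : orderOf x = orderOf y) :
    Subgroup.zpowers x = Subgroup.zpowers y := by
  have h : Subgroup.zpowers (⟨x, hx⟩ : A) = Subgroup.zpowers ⟨y, hy⟩ := by
    ext a
    rw [mem_zpowers_iff_pow_orderOf_eq_one, mem_zpowers_iff_pow_orderOf_eq_one,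
      Subgroup.orderOf_mk, Subgroup.orderOf_mk, hxy]
  exact zpowers_eq_zpowers_of_zpowers_mk_eq h

theorem eq_top_of_card_le_two_mul {G : Type*} [Group G] [Finite G] [IsSimpleGroup G]
    {M : Subgroup G} (hM : M ≠ ⊥) (h : Nat.card G ≤ 2 * Nat.card M) : M = ⊤ := by
  rw [← M.index_mul_card] at h
  have hle : M.index ≤ 2 := Nat.le_of_mul_le_mul_right h Nat.card_pos
  have hne : M.index ≠ 0 := Subgroup.index_ne_zero_of_finite
  rcases show M.index = 1 ∨ M.index = 2 by omega with h1 | h2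
  · exact Subgroup.index_eq_one.1 h1
  · exact (Subgroup.normal_of_index_eq_two h2).eq_bot_or_eq_top.resolve_left hM

namespace IsMoebiusAction

variable {E L Ω : Type*} [Field E] [Finite E] [Group L] [Finite L] [MulAction L Ω]
  [FaithfulSMul L Ω] [Finite Ω] (h : IsMoebiusAction E L Ω)
include h

theorem exists_dvd_ncard_unipotents_add_one {n : ℕ} (hn : 7 ≤ n) (hodd : Odd n)
    (hcop : ∀ ω : Ω, n.Coprime (unipotents L ω).ncard)
    (hsub : ∀ ω : Ω, n ∣ (unipotents L ω).ncard - 1 → (unipotents L ω).ncard = 1)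
    {x y : L} (hx : orderOf x = n) (hy : orderOf y = n)
    (hxy : Subgroup.zpowers x ≠ Subgroup.zpowers y) :
    ∃ ω : Ω, 2 ≤ (unipotents L ω).ncard ∧ n ∣ (unipotents L ω).ncard + 1 ∧
      ((unipotents L ω).ncard + 1) * (unipotents L ω).ncard * ((unipotents L ω).ncard - 1) ≤
        2 * Nat.card L := by
  obtain ⟨p, _⟩ := CharP.exists E
  have : Fact p.Prime := ⟨CharP.char_is_prime E p⟩
  obtain ⟨ω₀, hxω⟩ := h.exists_smul_eq x
  have hdvd : n ∣ Nat.card (stabilizer L ω₀) :=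
    hx ▸ Subgroup.orderOf_dvd_natCard _ (show x ∈ stabilizer L ω₀ from hxω)
  have hQ₀ : (unipotents L ω₀).ncard = 1 := by
    obtain ⟨-, m, -, hcard, hm, -⟩ := h.card_stabilizer_eq p ω₀
    exact hsub ω₀ (((hcop ω₀).dvd_of_dvd_mul_left (hcard ▸ hdvd)).trans hm)
  have hc : 7 ≤ Nat.card (stabilizer L ω₀) := hn.trans (Nat.le_of_dvd Nat.card_pos hdvd)
  have := h.isCyclic_stabilizer hQ₀
  have hyω : y ∉ stabilizer L ω₀ := fun hyω ↦
    hxy (zpowers_eq_zpowers_of_mem_of_isCyclic hxω hyω (hx.trans hy.symm))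
  have hidx (k : ℕ) (hk : Nat.card L = k * Nat.card (stabilizer L ω₀)) :
      (stabilizer L ω₀).index = k := by
    rw [← Subgroup.index_mul_card (stabilizer L ω₀)] at hk
    exact Nat.eq_of_mul_eq_mul_right Nat.card_pos hk
  rcases h.card_eq_or_exists_parabolic hc hQ₀ with h1 | h2 | ⟨ω, hQ, hminus | ⟨hplus, hle⟩⟩
  · rw [Subgroup.index_eq_one.1 (hidx 1 (by rwa [one_mul]))] at hyω
    exact (hyω (Subgroup.mem_top y)).elim
  · exact (hyω (mem_of_odd_orderOf_of_index_two (hidx 2 h2) (hy ▸ hodd))).elim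
  · have := hsub ω (hdvd.trans hminus)
    omega
  · exact ⟨ω, hQ, hdvd.trans hplus, hle⟩

variable {p : ℕ} [CharP E p]

theorem card_pgl_two_le_two_mul_card {f n : ℕ} (hpow : ∀ a, p ^ a ∣ Nat.card L → a ≤ f)
    (hn : 7 ≤ n) (hodd : Odd n) (hcop : n.Coprime p) (hord : ∀ a, n ∣ p ^ a - 1 → 2 * f ∣ a)
    {x y : L} (hx : orderOf x = n) (hy : orderOf y = n)
    (hxy : Subgroup.zpowers x ≠ Subgroup.zpowers y) :
    (p ^ f + 1) * p ^ f * (p ^ f - 1) ≤ 2 * Nat.card L := by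
  have hQ (ω : Ω) : ∃ a ≤ f, (unipotents L ω).ncard = p ^ a := by
    obtain ⟨a, m, ha, hcard, -⟩ := h.card_stabilizer_eq p ω
    refine ⟨a, hpow a ?_, ha⟩
    exact ha ▸ (Dvd.intro m hcard.symm).trans (Subgroup.card_subgroup_dvd_card _)
  have hQcop (ω : Ω) : n.Coprime (unipotents L ω).ncard := by
    obtain ⟨a, -, ha⟩ := hQ ω
    exact ha ▸ hcop.pow_right a
  have hQone (ω : Ω) (hdvd : n ∣ (unipotents L ω).ncard - 1) : (unipotents L ω).ncard = 1 := by
    obtain ⟨a, haf, ha⟩ := hQ ω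
    have hfa (ha0 : 0 < a) : 2 * f ≤ a := Nat.le_of_dvd ha0 (hord a (ha ▸ hdvd))
    obtain rfl : a = 0 := by omega
    rw [ha, pow_zero]
  obtain ⟨ω, hω⟩ := h.exists_dvd_ncard_unipotents_add_one hn hodd hQcop hQone hx hy hxy
  obtain ⟨a, haf, ha⟩ := hQ ω
  obtain ⟨hQ2, hplus, hle⟩ := ha ▸ hω
  have hfa : f ∣ a := by
    refine Nat.dvd_of_mul_dvd_mul_left two_pos (hord _ ?_)
    rw [mul_comm, pow_mul, show (p ^ a) ^ 2 - 1 = (p ^ a + 1) * (p ^ a - 1) by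
      simpa only [one_pow] using Nat.sq_sub_sq (p ^ a) 1]
    exact hplus.mul_right _
  have ha0 : 0 < a := Nat.pos_of_ne_zero (by rintro rfl; simp at hQ2)
  rwa [haf.antisymm (Nat.le_of_dvd ha0 hfa)] at hle

end IsMoebiusAction

theorem coprime_pow_add_one_self {p f : ℕ} (hf : f ≠ 0) : (p ^ f + 1).Coprime p :=
  .of_dvd_right (dvd_pow_self p hf) (Nat.coprime_self_add_left.2 (Nat.coprime_one_left _))

theorem le_of_pow_dvd_card_pgl_two {p f a : ℕ} (hp : 1 < p) (hf : f ≠ 0)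
    (h : p ^ a ∣ (p ^ f + 1) * p ^ f * (p ^ f - 1)) : a ≤ f := by
  have hplus : (p ^ f + 1).Coprime p := coprime_pow_add_one_self hf
  have hminus : (p ^ f - 1).Coprime p :=
    .of_dvd_right (dvd_pow_self p hf) ((Nat.coprime_self_sub_left (Nat.one_le_pow _ _ (by omega))).2
      (Nat.coprime_one_left _))
  refine (Nat.pow_dvd_pow_iff_le_right hp).1 ?_
  exact (hplus.symm.pow_left a).dvd_of_dvd_mul_left
    ((hminus.symm.pow_left a).dvd_of_dvd_mul_right h)

theorem HasPPGenerator.of_isMoebiusAction {E G Ω : Type*} [Field E] [Finite E] [Group G] [Finite G]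
    [IsSimpleGroup G] (hcyc : ¬ IsCyclic G) [MulAction G Ω] [FaithfulSMul G Ω] [Finite Ω]
    (h : IsMoebiusAction E G Ω) {p f r j z : ℕ} [Fact p.Prime] [CharP E p] [Fact r.Prime]
    (hz : z ∣ 2) (hcard : Nat.card G * z = (p ^ f + 1) * p ^ f * (p ^ f - 1))
    (hf : f ≠ 0) (hr : r ≠ 2) (hj : j ≠ 0) (hdvd : r ^ j ∣ p ^ f + 1) (hn : 7 ≤ r ^ j)
    (hord : ∀ a, r ^ j ∣ p ^ a - 1 → 2 * f ∣ a) {κ : MulAut G} (hκ : κ ≠ 1) :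
    HasPPGenerator κ := by
  have hp : p.Prime := Fact.out
  have hrprime : r.Prime := Fact.out
  have hodd : Odd (r ^ j) := (hrprime.odd_of_ne_two hr).pow
  have hcop : (r ^ j).Coprime p :=
    .of_dvd_left hdvd (coprime_pow_add_one_self hf)
  have hrp : r ≠ p := (Nat.coprime_primes hrprime hp).1 <|
    (Nat.coprime_pow_left_iff (Nat.pos_of_ne_zero hj) r p).1 hcop
  have hdvd_card : r ^ j ∣ Nat.card G := by
    refine (Nat.coprime_two_right.2 hodd |>.coprime_dvd_right hz).dvd_of_dvd_mul_right ?_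
    rw [hcard, mul_assoc]
    exact hdvd.mul_right _
  have hpow (a : ℕ) (ha : p ^ a ∣ Nat.card G) : a ≤ f :=
    le_of_pow_dvd_card_pgl_two hp.one_lt hf (hcard ▸ ha.mul_right z)
  obtain ⟨x, hx⟩ := h.exists_orderOf_eq_prime_pow p hr hrp hdvd_card
  refine .of_forall_orderOf_eq hcyc (hrprime.isPrimePow.pow hj) hx
    (fun y w hy hw hyw M hyM hwM ↦ ?_) hκ
  have hM : (p ^ f + 1) * p ^ f * (p ^ f - 1) ≤ 2 * Nat.card M :=
    (h.subgroup M).card_pgl_two_le_two_mul_card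
      (fun a ha ↦ hpow a (ha.trans (Subgroup.card_subgroup_dvd_card M))) hn hodd hcop hord
      (x := ⟨y, hyM⟩) (y := ⟨w, hwM⟩) (by rwa [Subgroup.orderOf_mk]) (by rwa [Subgroup.orderOf_mk])
      fun heq ↦ hyw ?_
  · refine eq_top_of_card_le_two_mul ?_ ?_
    · rintro rfl
      rw [Subgroup.mem_bot.1 hyM, orderOf_one] at hy
      omega
    · exact (Nat.le_mul_of_pos_right _ (Nat.pos_of_dvd_of_pos hz two_pos)).trans (hcard ▸ hM)
  · exact zpowers_eq_zpowers_of_zpowers_mk_eq heq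

end OrbitCounting

section NumberTheory

open Polynomial

theorem pow_sub_one_mul_eval_cyclotomic_dvd {R : Type*} [CommRing R] (x : R) {d n : ℕ}
    (hd : d ∈ n.properDivisors) :
    (x ^ d - 1) * (cyclotomic n R).eval x ∣ x ^ n - 1 := by
  simpa only [eval_mul, eval_sub, eval_pow, eval_X, eval_one] using
    eval_dvd (x := x) (X_pow_sub_one_mul_cyclotomic_dvd_X_pow_sub_one_of_dvd R hd)

theorem eval_cyclotomic_two_mul_dvd {R : Type*} [CommRing R] [IsDomain R] {x : R} {f : ℕ}
    (hf : f ≠ 0) (hx : x ^ f ≠ 1) : (cyclotomic (2 * f) R).eval x ∣ x ^ f + 1 := by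
  have h := pow_sub_one_mul_eval_cyclotomic_dvd x (d := f) (n := 2 * f)
    (Nat.mem_properDivisors.2 ⟨dvd_mul_left _ _, by omega⟩)
  rw [show x ^ (2 * f) - 1 = (x ^ f - 1) * (x ^ f + 1) by ring] at h
  exact (mul_dvd_mul_iff_left (sub_ne_zero.2 hx)).1 h

theorem dvd_pow_sub_one_iff_natCast_pow_eq_one {p : ℕ} (hp : p ≠ 0) (n a : ℕ) :
    n ∣ p ^ a - 1 ↔ (p : ZMod n) ^ a = 1 := by
  rw [← Nat.cast_pow, ← ZMod.natCast_eq_zero_iff,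
    Nat.cast_sub (Nat.one_le_pow a p (Nat.pos_of_ne_zero hp)), sub_eq_zero, Nat.cast_one]

theorem orderOf_zmod_lt {n : ℕ} (hn : 1 < n) {a : ZMod n} (ha : IsUnit a) : orderOf a < n := by
  have : NeZero n := ⟨by omega⟩
  obtain ⟨u, rfl⟩ := ha
  calc orderOf (u : ZMod n) = orderOf u := orderOf_units
    _ ≤ Fintype.card (ZMod n)ˣ := orderOf_le_card_univ
    _ = n.totient := ZMod.card_units_eq_totient n
    _ < n := Nat.totient_lt n hn

theorem orderOf_natCast_zmod_of_dvd_eval_cyclotomic {p f r j : ℕ} (hp : 1 < p) (hf : f ≠ 0)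
    (hr : r.Prime) (hr2 : r ≠ 2) (hdvd : (r : ℤ) ∣ (cyclotomic (2 * f) ℤ).eval (p : ℤ))
    (hj : j ≠ 0) (hle : r ^ j ∣ p ^ f + 1) (hlt : ¬ r ^ (j + 1) ∣ p ^ f + 1) :
    orderOf (p : ZMod (r ^ j)) = 2 * f := by
  have hp0 : p ≠ 0 := by omega
  have hpf : 1 ≤ p ^ f := Nat.one_le_pow _ _ (by omega)
  have hmul : p ^ (2 * f) - 1 = (p ^ f - 1) * (p ^ f + 1) := by
    rw [mul_comm 2, pow_mul, mul_comm (_ - 1)]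
    simpa only [one_pow] using Nat.sq_sub_sq (p ^ f) 1
  have hcop : (r ^ (j + 1)).Coprime (p ^ f - 1) := by
    refine Nat.Coprime.pow_left _ ((Nat.Prime.coprime_iff_not_dvd hr).2 fun h ↦ hr2 ?_)
    have h2 := Nat.dvd_sub ((dvd_pow_self r hj).trans hle) h
    rw [show p ^ f + 1 - (p ^ f - 1) = 2 by omega] at h2
    exact (Nat.prime_dvd_prime_iff_eq hr Nat.prime_two).1 h2
  have hd : orderOf (p : ZMod (r ^ j)) ∣ 2 * f := by
    refine orderOf_dvd_of_pow_eq_one ((dvd_pow_sub_one_iff_natCast_pow_eq_one hp0 _ _).1 ?_)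
    exact hmul ▸ hle.mul_left _
  by_contra hne
  have hproper : orderOf (p : ZMod (r ^ j)) ∈ (2 * f).properDivisors :=
    Nat.mem_properDivisors.2 ⟨hd, (Nat.le_of_dvd (by omega) hd).lt_of_ne hne⟩
  have hpow : ((r ^ j : ℕ) : ℤ) ∣ (p : ℤ) ^ orderOf (p : ZMod (r ^ j)) - 1 := by
    rw [← ZMod.intCast_zmod_eq_zero_iff_dvd]
    push_cast
    rw [pow_orderOf_eq_one, sub_self]
  have hdvd' := (mul_dvd_mul hpow hdvd).trans (pow_sub_one_mul_eval_cyclotomic_dvd _ hproper)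
  refine hlt (hcop.dvd_of_dvd_mul_left (hmul ▸ ?_))
  rw [← Int.natCast_dvd_natCast, Nat.cast_sub (Nat.one_le_pow _ _ (by omega)), pow_succ]
  exact_mod_cast hdvd'

theorem odd_geom_sum_sq {p : ℤ} (hp : Odd p) {f : ℕ} (hf : Odd f) :
    Odd (∑ i ∈ Finset.range f, (p ^ 2) ^ i) := by
  have hp2 : (p : ZMod 2) = 1 := by
    obtain ⟨k, rfl⟩ := hp
    push_cast
    rw [show (2 : ZMod 2) = 0 from rfl, zero_mul, zero_add]
  rw [← Int.not_even_iff_odd, even_iff_two_dvd]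
  intro h
  have h0 := (ZMod.intCast_zmod_eq_zero_iff_dvd _ 2).2 h
  push_cast at h0
  simp only [hp2, one_pow, Finset.sum_const, Finset.card_range, nsmul_one,
    ZMod.natCast_eq_zero_iff] at h0
  exact Nat.not_even_iff_odd.2 hf (even_iff_two_dvd.2 h0)

theorem not_four_dvd_eval_cyclotomic {p : ℕ} (hp : 1 < p) {f : ℕ} (hf : 2 ≤ f) :
    ¬ (4 : ℤ) ∣ (cyclotomic (2 * f) ℤ).eval (p : ℤ) := by
  intro h4
  have hpf : (p : ℤ) ^ f ≠ 1 := by exact_mod_cast (Nat.one_lt_pow (by omega) hp).ne'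
  have h4f := h4.trans (eval_cyclotomic_two_mul_dvd (by omega) hpf)
  have hodd : Odd (p : ℤ) := by
    have heven : Even ((p : ℤ) ^ f + 1) := even_iff_two_dvd.2 (.trans (by decide) h4f)
    rw [Int.even_add_one, Int.not_even_iff_odd] at heven
    exact (Int.odd_pow.1 heven).resolve_right (by omega)
  rcases Nat.even_or_odd f with ⟨e, rfl⟩ | hfo
  · obtain ⟨b, hb⟩ := hodd.pow (n := e)
    rw [pow_add, hb, show (2 * b + 1) * (2 * b + 1) + 1 = 4 * (b * b + b) + 2 by ring] at h4f
    omega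
  · have hsum := pow_sub_one_mul_eval_cyclotomic_dvd (p : ℤ) (d := 2) (n := 2 * f)
      (Nat.mem_properDivisors.2 ⟨dvd_mul_right _ _, by omega⟩)
    rw [pow_mul, ← mul_geom_sum ((p : ℤ) ^ 2) f] at hsum
    have hp2 : (p : ℤ) ^ 2 ≠ 1 := by exact_mod_cast (Nat.one_lt_pow (by omega) hp).ne'
    have hdvd := h4.trans ((mul_dvd_mul_iff_left (sub_ne_zero.2 hp2)).1 hsum)
    exact Int.not_even_iff_odd.2 (odd_geom_sum_sq hodd hfo)
      (even_iff_two_dvd.2 (.trans (by decide) hdvd))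

theorem two_lt_eval_cyclotomic {p : ℕ} (hp : 1 < p) {f : ℕ} (hf : 2 ≤ f) :
    2 < (cyclotomic (2 * f) ℤ).eval (p : ℤ) := by
  have hlt : ((p : ℤ) - 1) ^ (2 * f).totient < (cyclotomic (2 * f) ℤ).eval (p : ℤ) := by
    have h := sub_one_pow_totient_lt_cyclotomic_eval (n := 2 * f) (q := (p : ℝ)) (by omega)
      (by exact_mod_cast hp)
    rw [← map_cyclotomic_int, eval_map, eval₂_at_natCast, eq_intCast] at h
    exact_mod_cast h
  have htot : 2 ≤ (2 * f).totient := by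
    obtain ⟨k, hk⟩ := Nat.totient_even (n := 2 * f) (by omega)
    have := Nat.totient_pos.2 (show 0 < 2 * f by omega)
    omega
  rcases (show p = 2 ∨ 3 ≤ p by omega) with rfl | hp3
  · have hdvd : (cyclotomic (2 * f) ℤ).eval ((2 : ℕ) : ℤ) ∣ ((2 : ℕ) : ℤ) ^ f + 1 :=
      eval_cyclotomic_two_mul_dvd (by omega) (by exact_mod_cast (Nat.one_lt_pow (by omega) hp).ne')
    have hne : (cyclotomic (2 * f) ℤ).eval ((2 : ℕ) : ℤ) ≠ 2 := by
      intro h2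
      have hpow : (2 : ℤ) ∣ 2 ^ f := dvd_pow_self 2 (by omega)
      rw [h2, Nat.cast_ofNat] at hdvd
      omega
    norm_num at hlt hne ⊢
    omega
  · calc (2 : ℤ) ≤ (p - 1) ^ 1 := by rw [pow_one]; omega
      _ ≤ (p - 1) ^ (2 * f).totient := pow_le_pow_right₀ (by omega) (by omega)
      _ < _ := hlt

theorem exists_prime_dvd_eval_cyclotomic {p : ℕ} (hp : 1 < p) {f : ℕ} (hf : 2 ≤ f) :
    ∃ r : ℕ, r.Prime ∧ r ≠ 2 ∧ (r : ℤ) ∣ (cyclotomic (2 * f) ℤ).eval (p : ℤ) := by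
  have hlt : 2 < ((cyclotomic (2 * f) ℤ).eval (p : ℤ)).natAbs := by
    have := two_lt_eval_cyclotomic hp hf
    omega
  rcases Nat.four_dvd_or_exists_odd_prime_and_dvd_of_two_lt hlt with h | ⟨r, hr, hdvd, hodd⟩
  · exact (not_four_dvd_eval_cyclotomic hp hf (Int.natCast_dvd.2 h)).elim
  · exact ⟨r, hr, (hodd.ne_two_of_dvd_nat dvd_rfl), Int.natCast_dvd.2 hdvd⟩

theorem exists_prime_pow_dvd_sq_add_one {p : ℕ} (hp : 5 ≤ p) (hodd : Odd p) :
    ∃ r j : ℕ, r.Prime ∧ r ≠ 2 ∧ 7 ≤ r ^ j ∧ r ^ j ∣ p ^ 2 + 1 := by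
  have hp25 : 25 ≤ p ^ 2 := Nat.pow_le_pow_left hp 2
  have h3 : ¬ 3 ∣ p ^ 2 + 1 := by
    rw [Nat.dvd_iff_mod_eq_zero, Nat.add_mod, Nat.pow_mod]
    have := Nat.mod_lt p three_pos
    interval_cases p % 3 <;> decide
  have h4 : ¬ 4 ∣ p ^ 2 + 1 := by
    obtain ⟨k, rfl⟩ := hodd
    rw [show (2 * k + 1) ^ 2 + 1 = 4 * (k ^ 2 + k) + 2 by ring]
    omega
  by_cases h25 : 5 ^ 2 ∣ p ^ 2 + 1
  · exact ⟨5, 2, Nat.prime_five, by decide, by decide, h25⟩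
  obtain ⟨u, hu⟩ := Nat.gcd_dvd_left (p ^ 2 + 1) 10
  have hgcd : (p ^ 2 + 1).gcd 10 ≤ 10 := Nat.gcd_le_right _ (by decide)
  obtain ⟨r, hr, hru⟩ := Nat.exists_prime_and_dvd (n := u) (by rintro rfl; omega)
  have hrdvd : r ∣ p ^ 2 + 1 := hu ▸ hru.mul_left _
  have hsq (h10 : r ∣ 10) : r * r ∣ p ^ 2 + 1 :=
    hu ▸ mul_dvd_mul (Nat.dvd_gcd hrdvd h10) hru
  have hr7 : 7 ≤ r := by
    by_contra! hlt
    interval_cases r <;> first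
      | exact absurd hr (by decide)
      | exact h3 hrdvd
      | exact h4 (hsq (by decide))
      | exact h25 (hsq (by decide))
  exact ⟨r, 1, hr, by omega, by rwa [pow_one], by rwa [pow_one]⟩

theorem eval_cyclotomic_four {R : Type*} [CommRing R] (x : R) :
    (cyclotomic 4 R).eval x = x ^ 2 + 1 := by
  rw [show (4 : ℕ) = 2 ^ (1 + 1) from rfl, cyclotomic_prime_pow_eq_geom_sum Nat.prime_two]
  simp only [Finset.sum_range_succ, Finset.sum_range_zero, pow_one, pow_zero, zero_add, eval_add,
    eval_one, eval_pow, eval_X, add_comm]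

theorem exists_prime_dvd_eval_cyclotomic_and_large {p f : ℕ} (hp : p.Prime) (hf : 2 ≤ f)
    (h4 : p ^ f ≠ 4) (h9 : p ^ f ≠ 9) :
    ∃ r : ℕ, r.Prime ∧ r ≠ 2 ∧ (r : ℤ) ∣ (cyclotomic (2 * f) ℤ).eval (p : ℤ) ∧
      (3 ≤ f ∨ ∃ i, 7 ≤ r ^ i ∧ r ^ i ∣ p ^ f + 1) := by
  rcases hf.eq_or_lt' with rfl | hf3
  · have hp5 : 5 ≤ p := hp.five_le_of_ne_two_of_ne_three (by rintro rfl; exact h4 rfl)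
      (by rintro rfl; exact h9 rfl)
    obtain ⟨r, i, hr, hr2, h7, hri⟩ :=
      exists_prime_pow_dvd_sq_add_one hp5 (hp.odd_of_ne_two (by omega))
    refine ⟨r, hr, hr2, ?_, .inr ⟨i, h7, hri⟩⟩
    have hi : i ≠ 0 := by rintro rfl; simp at h7
    rw [eval_cyclotomic_four]
    exact_mod_cast (dvd_pow_self r hi).trans hri
  · obtain ⟨r, hr, hr2, hcyc⟩ := exists_prime_dvd_eval_cyclotomic hp.one_lt hf
    exact ⟨r, hr, hr2, hcyc, .inl hf3⟩

theorem exists_prime_pow_dvd_pow_add_one {p f : ℕ} (hp : p.Prime) (hf : 2 ≤ f) (h4 : p ^ f ≠ 4)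
    (h9 : p ^ f ≠ 9) :
    ∃ r j : ℕ, r.Prime ∧ r ≠ 2 ∧ j ≠ 0 ∧ 7 ≤ r ^ j ∧ r ^ j ∣ p ^ f + 1 ∧
      ∀ a, r ^ j ∣ p ^ a - 1 → 2 * f ∣ a := by
  obtain ⟨r, hr, hr2, hcyc, hlarge⟩ := exists_prime_dvd_eval_cyclotomic_and_large hp hf h4 h9
  have hpf : (p : ℤ) ^ f ≠ 1 := by exact_mod_cast (Nat.one_lt_pow (by omega) hp.one_lt).ne'
  have hrdvd : r ∣ p ^ f + 1 := by
    exact_mod_cast hcyc.trans (eval_cyclotomic_two_mul_dvd (by omega) hpf)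
  obtain ⟨j, hle⟩ : ∃ j, ∀ i, r ^ i ∣ p ^ f + 1 ↔ i ≤ j :=
    ⟨_, fun _ ↦ hr.pow_dvd_iff_le_factorization (Nat.succ_ne_zero _)⟩
  have hj : j ≠ 0 := Nat.one_le_iff_ne_zero.1 ((hle 1).1 (by rwa [pow_one]))
  have hdvd : r ^ j ∣ p ^ f + 1 := (hle j).2 le_rfl
  have hord : orderOf (p : ZMod (r ^ j)) = 2 * f :=
    orderOf_natCast_zmod_of_dvd_eval_cyclotomic hp.one_lt (by omega) hr hr2 hcyc hj hdvd
      fun h ↦ ((hle _).1 h).not_gt j.lt_succ_self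
  refine ⟨r, j, hr, hr2, hj, ?_, hdvd, fun a ha ↦ ?_⟩
  · rcases hlarge with hf3 | ⟨i, h7, hi⟩
    · have hunit : IsUnit (p : ZMod (r ^ j)) :=
        IsUnit.of_pow_eq_one (hord ▸ pow_orderOf_eq_one _) (by omega)
      have := orderOf_zmod_lt (Nat.one_lt_pow hj hr.one_lt) hunit
      omega
    · exact h7.trans (Nat.pow_le_pow_right hr.pos ((hle i).1 hi))
  · exact hord ▸ orderOf_dvd_of_pow_eq_one
      ((dvd_pow_sub_one_iff_natCast_pow_eq_one hp.ne_zero _ _).1 ha)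

end NumberTheory

section ProjectiveLine

universe u

open Module LinearAlgebra.Projectivization Projectivization

section Charts

variable {E V : Type*} [Field E] [AddCommGroup V] [Module E V] {v w : V}
  (hvw : LinearIndependent E ![v, w])

include hvw in
theorem smul_add_ne_zero (z : E) : z • v + w ≠ 0 := fun h ↦
  one_ne_zero (LinearIndependent.pair_iff.1 hvw z 1 (by rwa [one_smul])).2

/-- The point of a projective line with affine coordinate `z`, for the coordinate that is infinite
at the point spanned by `v` and zero at the point spanned by `w`. -/
def affinePoint (z : E) : ℙ E V :=
  mk E (z • v + w) (smul_add_ne_zero hvw z)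

theorem affinePoint_injective : Function.Injective (affinePoint hvw) := fun z z' hz ↦ by
  obtain ⟨a, ha⟩ := (mk_eq_mk_iff' E _ _ _ _).1 hz
  have h := LinearIndependent.pair_iff.1 hvw (a * z' - z) (a - 1)
    (by rw [← sub_eq_zero] at ha; rw [← ha]; module)
  linear_combination z' * h.2 - h.1

theorem affinePoint_ne (hv : v ≠ 0) (z : E) : affinePoint hvw z ≠ mk E v hv := fun h ↦ by
  obtain ⟨a, ha⟩ := (mk_eq_mk_iff' E _ _ _ _).1 h
  exact smul_add_ne_zero hvw (z - a) (by rw [sub_smul, ha]; abel)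

variable (hV : finrank E V = 2)
include hV

include hvw in
theorem exists_eq_smul_add_smul (u : V) : ∃ a b : E, u = a • v + b • w := by
  have hspan := hvw.span_eq_top_of_card_eq_finrank (by simp [hV])
  rw [Matrix.range_cons_cons_empty] at hspan
  obtain ⟨a, b, hab⟩ := Submodule.mem_span_pair.1 (hspan.symm ▸ Submodule.mem_top (x := u))
  exact ⟨a, b, hab.symm⟩

theorem range_affinePoint (hv : v ≠ 0) : Set.range (affinePoint hvw) = {mk E v hv}ᶜ := by
  refine (Set.range_subset_iff.2 (affinePoint_ne hvw hv)).antisymm fun η hη ↦ ?_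
  induction η using Projectivization.ind with | h u hu => ?_
  obtain ⟨x, y, rfl⟩ := exists_eq_smul_add_smul hvw hV u
  have hy : y ≠ 0 := by
    rintro rfl
    exact hη ((mk_eq_mk_iff' E _ _ _ _).2 ⟨x, by rw [zero_smul, add_zero]⟩)
  refine ⟨x / y, (mk_eq_mk_iff' E _ _ _ _).2 ⟨y⁻¹, ?_⟩⟩
  match_scalars <;> field_simp

variable {L : Type*} [Group L] [DistribMulAction L V] [SMulCommClass L E V]

theorem exists_smul_affinePoint_eq (hv : v ≠ 0) (g : MulAction.stabilizer L (mk E v hv)) :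
    ∃ a b : E, ∀ z, (g : L) • affinePoint hvw z = affinePoint hvw (a * z + b) := by
  have hfix (g : MulAction.stabilizer L (mk E v hv)) : ∃ a : E, a • v = (g : L) • v :=
    (mk_eq_mk_iff' E _ _ _ hv).1 g.2
  obtain ⟨a, ha⟩ := hfix g
  obtain ⟨b, d, hbd⟩ := exists_eq_smul_add_smul hvw hV ((g : L) • w)
  have hd : d ≠ 0 := by
    rintro rfl
    obtain ⟨a', ha'⟩ := hfix g⁻¹
    have hw : w = (b * a') • v := by
      rw [mul_smul, ha', Subgroup.coe_inv, ← smul_comm, eq_inv_smul_iff, hbd, zero_smul, add_zero]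
    exact smul_add_ne_zero hvw (-(b * a')) (by rw [neg_smul, ← hw, neg_add_cancel])
  refine ⟨a / d, b / d, fun z ↦ (mk_eq_mk_iff' E _ _ _ _).2 ⟨d, ?_⟩⟩
  change _ = (g : L) • (z • v + w)
  rw [smul_add (g : L), smul_comm (g : L), ← ha, hbd]
  match_scalars <;> field_simp

theorem nonempty_affineChart_projectivization (ω : ℙ E V) : Nonempty (AffineChart E L ω) := by
  induction ω using Projectivization.ind with | h v hv => ?_
  obtain ⟨w, hvw⟩ := exists_linearIndependent_pair_of_one_lt_finrank (hV ▸ one_lt_two) hv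
  choose slope offset hsmul using exists_smul_affinePoint_eq (L := L) hvw hV hv
  exact ⟨⟨affinePoint hvw, affinePoint_injective hvw, range_affinePoint hvw hV hv, slope, offset,
    hsmul⟩⟩

end Charts

section FieldExtension

theorem exists_finite_extension_splits_charpoly (F : Type u) [Field F] [Finite F] (n : Type*)
    [Fintype n] [DecidableEq n] :
    ∃ (E : Type u) (_ : Field E) (_ : Algebra F E), Finite E ∧
      ∀ A : Matrix n n F, (A.map (algebraMap F E)).charpoly.Splits := by
  cases nonempty_fintype F
  let P : Polynomial F := ∏ A : Matrix n n F, A.charpoly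
  refine ⟨P.SplittingField, inferInstance, inferInstance, Module.finite_of_finite F, fun A ↦ ?_⟩
  have hP : P.map (algebraMap F P.SplittingField) ≠ 0 :=
    ((Polynomial.monic_prod_of_monic _ _ fun A _ ↦ A.charpoly_monic).map _).ne_zero
  rw [Matrix.charpoly_map]
  exact (Polynomial.SplittingField.splits P).of_dvd hP
    (Polynomial.map_dvd _ (Finset.dvd_prod_of_mem _ (Finset.mem_univ A)))

variable {n : Type*} [Fintype n] [DecidableEq n]

theorem exists_mulVec_eq_smul_of_splits_charpoly {F : Type*} [Field F] [Nonempty n]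
    {A : Matrix n n F} (hA : A.charpoly.Splits) : ∃ v ≠ 0, ∃ a : F, A.mulVec v = a • v := by
  obtain ⟨a, ha⟩ := hA.exists_eval_eq_zero (by
    rw [A.charpoly_degree_eq_dim]; exact_mod_cast Fintype.card_ne_zero)
  rw [← A.charpoly_toLin'] at ha
  obtain ⟨v, hv⟩ :=
    ((Module.End.hasEigenvalue_iff_isRoot_charpoly A.toLin' a).2 ha).exists_hasEigenvector
  exact ⟨v, hv.2, a, hv.apply_eq_smul⟩

theorem map_mem_center_iff {F E : Type*} [Field F] [Field E] (φ : F →+* E)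
    {A : Matrix.SpecialLinearGroup n F} :
    Matrix.SpecialLinearGroup.map φ A ∈ Subgroup.center (Matrix.SpecialLinearGroup n E) ↔
      A ∈ Subgroup.center (Matrix.SpecialLinearGroup n F) := by
  have hinj : Function.Injective (Matrix.SpecialLinearGroup.map (n := n) φ) := fun A B h ↦
    Subtype.ext (Matrix.map_injective φ.injective (congrArg Subtype.val h))
  refine ⟨fun h ↦ Subgroup.mem_center_iff.2 fun B ↦ hinj ?_, fun h ↦ ?_⟩
  · rw [map_mul, map_mul, Subgroup.mem_center_iff.1 h]
  · obtain ⟨r, hr, hA⟩ := Matrix.SpecialLinearGroup.mem_center_iff.1 h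
    refine Matrix.SpecialLinearGroup.mem_center_iff.2 ⟨φ r, by rw [← map_pow, hr, map_one], ?_⟩
    rw [Matrix.SpecialLinearGroup.map_apply_coe, ← hA]
    simp

/-- The homomorphism of projective special linear groups induced by a field extension. -/
def pslMap (F E n : Type*) [Field F] [Field E] [Algebra F E] [Fintype n] [DecidableEq n] :
    Matrix.ProjectiveSpecialLinearGroup n F →* Matrix.ProjectiveSpecialLinearGroup n E :=
  QuotientGroup.map _ _ (Matrix.SpecialLinearGroup.map (algebraMap F E)) fun _ hA ↦
    (map_mem_center_iff _).2 hA

theorem pslMap_injective (F E n : Type*) [Field F] [Field E] [Algebra F E] [Fintype n]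
    [DecidableEq n] : Function.Injective (pslMap F E n) := by
  refine (injective_iff_map_eq_one _).2 fun g hg ↦ ?_
  induction g using QuotientGroup.induction_on with | H A => ?_
  exact (QuotientGroup.eq_one_iff A).2 <|
    (map_mem_center_iff (algebraMap F E)).1 ((QuotientGroup.eq_one_iff _).1 hg)

end FieldExtension

theorem exists_isMoebiusAction_psl_two (F : Type u) [Field F] [Finite F] :
    ∃ (E : Type u) (_ : Field E) (_ : Algebra F E) (_ : MulAction PSL(2, F) (ℙ E (Fin 2 → E))),
      Finite E ∧ FaithfulSMul PSL(2, F) (ℙ E (Fin 2 → E)) ∧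
        IsMoebiusAction E PSL(2, F) (ℙ E (Fin 2 → E)) := by
  obtain ⟨E, _, _, hE, hsplits⟩ := exists_finite_extension_splits_charpoly F (Fin 2)
  let : MulAction PSL(2, F) (ℙ E (Fin 2 → E)) := .compHom _ (pslMap F E (Fin 2))
  have hrep (g : PSL(2, F)) : ∃ A : SL(2, F), ∀ ω : ℙ E (Fin 2 → E),
      g • ω = Matrix.SpecialLinearGroup.map (algebraMap F E) A • ω := by
    obtain ⟨A, rfl⟩ := QuotientGroup.mk_surjective g
    exact ⟨A, fun _ ↦ rfl⟩
  refine ⟨E, inferInstance, inferInstance, this, hE, ⟨fun h ↦ ?_⟩, ⟨fun ω ↦ ?_, fun g ↦ ?_⟩⟩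
  · exact pslMap_injective F E (Fin 2) (FaithfulSMul.eq_of_smul_eq_smul h)
  · obtain ⟨c⟩ := nonempty_affineChart_projectivization (L := SL(2, E)) (by simp) ω
    exact c.nonempty_of_forall_exists_smul_eq fun g ↦ ⟨_, (hrep g).choose_spec⟩
  · obtain ⟨A, hA⟩ := hrep g
    obtain ⟨v, hv, a, ha⟩ := exists_mulVec_eq_smul_of_splits_charpoly (hsplits A)
    exact ⟨mk E v hv, (hA _).trans ((mk_eq_mk_iff' E _ _ _ _).2 ⟨a, ha.symm⟩)⟩

end ProjectiveLine

section Card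

theorem card_specialLinearGroup_mul_card_units (R n : Type*) [CommRing R] [Fintype n]
    [DecidableEq n] [Nonempty n] :
    Nat.card (Matrix.SpecialLinearGroup n R) * Nat.card Rˣ = Nat.card (GL n R) := by
  have hker : (Matrix.GeneralLinearGroup.det (n := n) (R := R)).ker =
      Matrix.SpecialLinearGroup.toGL.range :=
    SetLike.coe_injective (Matrix.SpecialLinearGroup.range_toGL.symm)
  rw [← Subgroup.card_mul_index Matrix.GeneralLinearGroup.det.ker, Subgroup.index_ker,
    MonoidHom.range_eq_top.2 Matrix.GeneralLinearGroup.det_surjective, Subgroup.card_top, hker,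
    Nat.card_congr (MonoidHom.ofInjective Matrix.SpecialLinearGroup.toGL_injective).symm.toEquiv]

theorem card_sl_two (F : Type*) [Field F] [Finite F] :
    Nat.card SL(2, F) = (Nat.card F + 1) * Nat.card F * (Nat.card F - 1) := by
  cases nonempty_fintype F
  have h := card_specialLinearGroup_mul_card_units F (Fin 2)
  rw [Matrix.card_GL_field, Fin.prod_univ_two, Nat.card_units, ← Nat.card_eq_fintype_card] at h
  have hq : 0 < Nat.card F - 1 := Nat.sub_pos_of_lt Finite.one_lt_card
  refine Nat.eq_of_mul_eq_mul_right hq (h.trans ?_)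
  simp only [Fin.val_zero, Fin.val_one, pow_zero, pow_one]
  rw [← one_pow 2, Nat.sq_sub_sq, one_pow, sq, ← Nat.mul_sub_one]
  ring

theorem card_psl_two_mul (F : Type*) [Field F] [Finite F] :
    Nat.card PSL(2, F) * Nat.card (rootsOfUnity 2 F) =
      (Nat.card F + 1) * Nat.card F * (Nat.card F - 1) := by
  rw [← card_sl_two, ← Subgroup.index_mul_card (Subgroup.center SL(2, F))]
  exact congrArg _ (Nat.card_congr
    (Matrix.SpecialLinearGroup.center_equiv_rootsOfUnity' (0 : Fin 2)).symm.toEquiv)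

theorem card_rootsOfUnity_two_dvd (F : Type*) [Field F] : Nat.card (rootsOfUnity 2 F) ∣ 2 := by
  have h := card_rootsOfUnity F 2
  have hpos : 0 < Nat.card (rootsOfUnity 2 F) := Nat.card_pos
  interval_cases Nat.card (rootsOfUnity 2 F) <;> decide

end Card

section SocleProjectiveSpecialLinearGroup

theorem HasPPGenerator.of_congr {G G' : Type*} [Group G] [Group G'] (e : G ≃* G') {κ : MulAut G}
    (h : HasPPGenerator (MulAut.congr e κ)) : HasPPGenerator κ := by
  obtain ⟨x, hx, hM⟩ := h
  refine ⟨e.symm x, by rwa [IsPPElement, MulEquiv.orderOf_eq], fun M hxM hκM ↦ ?_⟩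
  have hmap : M.map e.toMonoidHom = ⊤ := by
    refine hM _ ⟨_, hxM, e.apply_symm_apply x⟩ ?_
    have hcomp : (MulAut.congr e κ).toMonoidHom.comp e.toMonoidHom =
        e.toMonoidHom.comp κ.toMonoidHom := MonoidHom.ext fun y ↦ by simp
    change (M.map e.toMonoidHom).map (MulAut.congr e κ).toMonoidHom = _
    rw [Subgroup.map_map, hcomp, ← Subgroup.map_map]
    exact congrArg _ hκM
  rwa [← Subgroup.map_top_of_surjective e.toMonoidHom e.surjective,
    (Subgroup.map_injective e.injective).eq_iff] at hmap

theorem HasPPGenerator.of_card_mul_eq {G : Type*} [Group G] [Finite G] [IsSimpleGroup G]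
    (hcyc : ¬ IsCyclic G) {n r z : ℕ} [hr : Fact r.Prime] (hr2 : r ≠ 2) (hz : z ∣ 2)
    (hcard : Nat.card G * z = n) (hdvd : r ∣ n) (hdvd2 : ¬ r ^ 2 ∣ n)
    (hlt : n < r ^ 2 * (r + 1)) {κ : MulAut G} (hκ : κ ≠ 1) : HasPPGenerator κ := by
  subst hcard
  have hrz : ¬ r ∣ z := fun h ↦
    hr2 ((Nat.prime_dvd_prime_iff_eq hr.out Nat.prime_two).1 (h.trans hz))
  exact of_card_lt hcyc ((hr.out.dvd_mul.1 hdvd).resolve_right hrz)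
    (fun h ↦ hdvd2 (h.mul_right z))
    ((Nat.le_mul_of_pos_right _ (Nat.pos_of_dvd_of_pos hz two_pos)).trans_lt hlt) hκ

theorem not_prime_of_mul_eq {m q z : ℕ} (hq : 4 ≤ q) (hz : z ∣ 2)
    (h : m * z = (q + 1) * q * (q - 1)) : ¬ m.Prime := fun hm ↦ by
  have hle : m ≤ q + 1 := by
    rcases hm.dvd_mul.1 (h ▸ dvd_mul_right m z) with h | h
    · rcases hm.dvd_mul.1 h with h | h <;> have := Nat.le_of_dvd (by omega) h <;> omega
    · have := Nat.le_of_dvd (by omega) h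
      omega
  have hlt : 2 < q * (q - 1) := calc
    2 < 4 * 3 := by norm_num
    _ ≤ q * (q - 1) := Nat.mul_le_mul hq (by omega)
  have := Nat.mul_le_mul hle (Nat.le_of_dvd two_pos hz)
  rw [h, mul_assoc] at this
  exact this.not_gt (Nat.mul_lt_mul_of_pos_left hlt q.succ_pos)

theorem not_sq_dvd_pred_mul_self_mul_succ {p : ℕ} (hp : 1 < p) :
    ¬ p ^ 2 ∣ (p + 1) * p * (p - 1) := fun h ↦ by
  rw [mul_right_comm, sq, Nat.mul_dvd_mul_iff_right (zero_lt_one.trans hp)] at h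
  have hsq : (p + 1) * (p - 1) + 1 = p * p := by
    obtain ⟨k, rfl⟩ := Nat.exists_eq_add_of_lt hp
    rw [Nat.add_sub_cancel]
    ring
  exact hp.ne' (Nat.dvd_one.1 ((Nat.dvd_add_right h).1 (hsq ▸ dvd_mul_right p p)))

theorem not_isCyclic_psl_two {F : Type*} [Field F] (hF : 4 ≤ Nat.card F) :
    ¬ IsCyclic PSL(2, F) := fun hcyc ↦ by
  have : Finite F := Nat.finite_of_card_ne_zero (by omega)
  have : IsSimpleGroup PSL(2, F) := Matrix.ProjectiveSpecialLinearGroup.rank_two_simple hF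
  let : CommGroup PSL(2, F) := hcyc.commGroup
  exact not_prime_of_mul_eq hF (card_rootsOfUnity_two_dvd F) (card_psl_two_mul F)
    IsSimpleGroup.prime_card

theorem hasPPGenerator_psl_two {F : Type*} [Field F] (hF : 4 ≤ Nat.card F)
    {κ : MulAut PSL(2, F)} (hκ : κ ≠ 1) : HasPPGenerator κ := by
  have : Finite F := Nat.finite_of_card_ne_zero (by omega)
  cases nonempty_fintype F
  have : IsSimpleGroup PSL(2, F) := Matrix.ProjectiveSpecialLinearGroup.rank_two_simple hF
  obtain ⟨p, _, ⟨f, hf⟩, hp, hq⟩ := FiniteField.card' F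
  rw [PNat.mk_coe] at hq
  have : Fact p.Prime := ⟨hp⟩
  have hcyc := not_isCyclic_psl_two hF
  have hz := card_rootsOfUnity_two_dvd F
  have hcard := card_psl_two_mul F
  rw [Nat.card_eq_fintype_card (α := F), hq] at hcard
  rw [Nat.card_eq_fintype_card, hq] at hF
  rcases eq_or_ne f 1 with rfl | hf1
  · rw [pow_one] at hcard hF
    have hlt : (p + 1) * p * (p - 1) < p ^ 2 * (p + 1) := by
      rw [mul_comm (p ^ 2), sq, mul_assoc]
      exact Nat.mul_lt_mul_of_pos_left
        (Nat.mul_lt_mul_of_pos_left (Nat.pred_lt hp.ne_zero) hp.pos) p.succ_pos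
    exact .of_card_mul_eq hcyc (by omega) hz hcard (dvd_mul_of_dvd_left (dvd_mul_left p _) _)
      (not_sq_dvd_pred_mul_self_mul_succ hp.one_lt) hlt hκ
  rcases eq_or_ne (p ^ f) 4 with h4 | h4
  · rw [h4] at hcard
    have : Fact (Nat.Prime 5) := ⟨Nat.prime_five⟩
    exact .of_card_mul_eq (r := 5) hcyc (by decide) hz hcard (by decide) (by decide) (by decide) hκ
  rcases eq_or_ne (p ^ f) 9 with h9 | h9
  · have hp2 : p ≠ 2 := by
      rintro rfl
      exact absurd (h9 ▸ dvd_pow_self 2 hf.ne') (by decide)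
    have hroots : Nat.card (rootsOfUnity 2 F) = 2 :=
      (IsPrimitiveRoot.neg_one p hp2).card_rootsOfUnity
    rw [h9, hroots] at hcard
    exact hasPPGenerator_of_card_eq_360 (by omega) hκ
  obtain ⟨r, j, hr, hr2, hj, hn, hdvd, hord⟩ :=
    exists_prime_pow_dvd_pow_add_one hp (show 2 ≤ f by omega) h4 h9
  have : Fact r.Prime := ⟨hr⟩
  obtain ⟨E, _, _, _, _, _, hE⟩ := exists_isMoebiusAction_psl_two F
  have : CharP E p := charP_of_injective_algebraMap (algebraMap F E).injective p
  exact .of_isMoebiusAction hcyc hE hz hcard hf.ne' hr2 hj hdvd hn hord hκ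

theorem t_eq_one_of_socle_psl_two_general {F H : Type*} [Field F] (hF : 4 ≤ Nat.card F) [Group H]
    {S : Subgroup H} [S.Normal] (hcent : Subgroup.centralizer (S : Set H) = ⊥)
    (hiso : Nonempty (S ≃* PSL(2, F))) {K : Subgroup H} (hbot : K ≠ ⊥)
    (hK : (K : Set H) * (S : Set H) = Set.univ) :
    ∃ x ∈ S, IsPPElement x ∧ K ⊔ Subgroup.closure {x} = ⊤ := by
  obtain ⟨e⟩ := hiso
  refine exists_sup_closure_eq_top_of_hasPPGenerator hcent (fun κ hκ ↦ .of_congr e ?_) hbot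
    (SetLike.coe_injective ((Subgroup.mul_normal K S).trans hK))
  exact hasPPGenerator_psl_two hF fun h ↦ hκ ((MulAut.congr e).injective (h.trans (map_one _).symm))

end SocleProjectiveSpecialLinearGroup

/-- Let `q = p^f ≥ 4` be a prime power and let `H` be a finite almost simple group whose
socle `S` (a nonabelian simple normal subgroup with trivial centralizer) is isomorphic
to `PSL₂(q)`, with `H ≠ S`. Then for every subgroup `K` of `H` with `H = KS` there is a
`pp`-element `x ∈ S` with `H = ⟨K, x⟩`, i.e. `t(H) = 1`. -/
theorem t_eq_one_of_socle_psl_two (q p f : ℕ) [Fact p.Prime] (hq : q = p ^ f)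
    (hf : 0 < f) (hq4 : 4 ≤ q)
    (H : Type*) [Group H] [Finite H] (S : Subgroup H)
    [S.Normal] (hsimple : IsSimpleGroup S) (hnonab : ¬ ∀ a b : S, a * b = b * a)
    (hcent : Subgroup.centralizer (S : Set H) = ⊥)
    (hiso : Nonempty
      (S ≃* Matrix.ProjectiveSpecialLinearGroup (Fin 2) (GaloisField p f)))
    (hne : S ≠ ⊤) :
    ∀ K : Subgroup H, (K : Set H) * (S : Set H) = Set.univ →
      ∃ x ∈ S, IsPPElement x ∧ K ⊔ Subgroup.closure {x} = ⊤ := by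
  intro K hK
  refine t_eq_one_of_socle_psl_two_general (by rwa [GaloisField.card p f hf.ne', ← hq]) hcent hiso
    (fun hbot ↦ hne (SetLike.coe_injective ?_)) hK
  rw [Subgroup.coe_top, ← hK, hbot, Subgroup.coe_bot, Set.singleton_one, one_mul]
end

section
/- Let n ≥ 5, let H = Sym(n) be the symmetric group of degree n, and let K = ⟨(1 2)⟩. Then the set Λ = {(1 2 3), (1 2)(3 4), (1 2)(3 5), …, (1 2)(3 n)} is a K-independent K-generating set for H of cardinality n − 2; in particular m_K(Sym(n)) ≥ n − 2. -/
/-!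
With `K = ⟨(a b)⟩`, multiplying the elements of `Λ` by `(a b)` turns them into the transpositions
`(a c)` and `(c k)`. So `K` and `Λ` generate every transposition through the point `c`, hence the
whole symmetric group. Independence is witnessed by set stabilizers: `K` and all of `Λ` except
`(a b c)` preserve `{a, b}`, while `K` and all of `Λ` except `(a b)(c k)` preserve `{k}`.
-/

/-- `m_K(H)`: the largest cardinality of a `K`-independent `K`-generating
set for `H`. -/
noncomputable def mRel {H : Type*} [Group H] (K : Subgroup H) : ℕ :=
  sSup {n | ∃ Y : Set H, K ⊔ Subgroup.closure Y = ⊤ ∧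
    (∀ Z : Set H, Z ⊂ Y → K ⊔ Subgroup.closure Z ≠ ⊤) ∧ Y.ncard = n}

section Group

variable {H : Type*} [Group H] {K : Subgroup H} {Y : Set H}

/-- The subset `Y` is `K`-generating: together with the subgroup `K` it generates the group. -/
def IsRelGenerating (K : Subgroup H) (Y : Set H) : Prop :=
  K ⊔ Subgroup.closure Y = ⊤

/-- The subset `Y` is `K`-independent: no proper subset of `Y` is `K`-generating. -/
def IsRelIndependent (K : Subgroup H) (Y : Set H) : Prop :=
  ∀ Z : Set H, Z ⊂ Y → ¬ IsRelGenerating K Z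

theorem isRelIndependent_of_forall_exists_subgroup
    (h : ∀ y ∈ Y, ∃ S : Subgroup H, S ≠ ⊤ ∧ K ≤ S ∧ Y \ {y} ⊆ S) : IsRelIndependent K Y := by
  intro Z hZ hgen
  obtain ⟨y, hy, hZy⟩ := Set.ssubset_iff_sdiff_singleton.1 hZ
  obtain ⟨S, hS, hK, hYS⟩ := h y hy
  exact hS (top_le_iff.1 (hgen.ge.trans (sup_le hK ((Subgroup.closure_le S).2 (hZy.trans hYS)))))

theorem ncard_le_mRel [Finite H] (hgen : IsRelGenerating K Y) (hind : IsRelIndependent K Y) :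
    Y.ncard ≤ mRel K := by
  refine le_csSup ⟨Nat.card H, ?_⟩ ⟨Y, hgen, hind, rfl⟩
  rintro _ ⟨X, -, -, rfl⟩
  exact Set.ncard_le_card X

end Group

section Perm

open Equiv MulAction
open scoped Pointwise

variable {α : Type*} [DecidableEq α] {a b c k : α}

theorem eq_top_of_forall_swap_mem [Finite α] {G : Subgroup (Perm α)}
    (h : ∀ k, swap c k ∈ G) : G = ⊤ := by
  rw [eq_top_iff, ← Perm.closure_isSwap, Subgroup.closure_le]
  rintro _ ⟨i, j, -, rfl⟩
  exact SubmonoidClass.swap_mem_trans G (swap_comm c i ▸ h i) (h j)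

/-- The generating set `Λ`, with the points `1, 2, 3` replaced by `a, b, c`: the 3-cycle `(a b c)`,
written as `(a c)(a b)` (the right factor acts first), and the products `(a b)(c k)` for the
remaining points `k`. -/
def threeCycleStar (a b c : α) : Set (Perm α) :=
  insert (swap a c * swap a b) ((fun k => swap a b * swap c k) '' {a, b, c}ᶜ)

theorem isRelGenerating_threeCycleStar [Finite α] :
    IsRelGenerating (Subgroup.closure {swap a b}) (threeCycleStar a b c) := by
  set G := Subgroup.closure {swap a b} ⊔ Subgroup.closure (threeCycleStar a b c)
  have hΛ : threeCycleStar a b c ⊆ G := fun x hx =>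
    Subgroup.mem_sup_right (Subgroup.subset_closure hx)
  have hab : swap a b ∈ G := Subgroup.mem_sup_left (Subgroup.mem_closure_singleton_self _)
  have hca : swap c a ∈ G :=
    swap_comm a c ▸ (Subgroup.mul_mem_cancel_right G hab).1 (hΛ (Set.mem_insert _ _))
  refine eq_top_of_forall_swap_mem (c := c) fun k => ?_
  by_cases hk : k ∈ ({a, b, c} : Set α)
  · rcases hk with rfl | rfl | rfl
    · exact hca
    · exact SubmonoidClass.swap_mem_trans G hca hab
    · exact swap_self k ▸ G.one_mem
  · exact (Subgroup.mul_mem_cancel_left G hab).1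
      (hΛ (Set.mem_insert_of_mem _ (Set.mem_image_of_mem _ hk)))

theorem closure_swap_le_stabilizer {s : Set α} (h : a ∈ s ↔ b ∈ s) :
    Subgroup.closure {swap a b} ≤ stabilizer (Perm α) s := by
  rwa [Subgroup.closure_le, Set.singleton_subset_iff, SetLike.mem_coe, swap_mem_stabilizer]

theorem threeCycleStar_sdiff_threeCycle_subset_stabilizer (hac : a ≠ c) (hbc : b ≠ c) :
    threeCycleStar a b c \ {swap a c * swap a b} ⊆ stabilizer (Perm α) ({a, b} : Set α) := by
  rintro _ ⟨rfl | ⟨k, hk, rfl⟩, hne⟩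
  · exact absurd rfl hne
  · have hk' : k ≠ a ∧ k ≠ b ∧ k ≠ c := by simpa using hk
    exact mul_mem (swap_mem_stabilizer.2 (by simp))
      (swap_mem_stabilizer.2 (by simp [hac.symm, hbc.symm, hk']))

theorem threeCycleStar_sdiff_swap_mul_swap_subset_stabilizer (hk : k ∉ ({a, b, c} : Set α)) :
    threeCycleStar a b c \ {swap a b * swap c k} ⊆ stabilizer (Perm α) ({k} : Set α) := by
  obtain ⟨hka, hkb, hkc⟩ : a ≠ k ∧ b ≠ k ∧ c ≠ k := by simpa [eq_comm] using hk
  have hab : swap a b ∈ stabilizer (Perm α) ({k} : Set α) :=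
    swap_mem_stabilizer.2 (by simp [hka, hkb])
  rintro _ ⟨rfl | ⟨j, -, rfl⟩, hne⟩
  · exact mul_mem (swap_mem_stabilizer.2 (by simp [hka, hkc])) hab
  · have hjk : j ≠ k := by rintro rfl; exact hne rfl
    exact mul_mem hab (swap_mem_stabilizer.2 (by simp [hkc, hjk]))

theorem isRelIndependent_threeCycleStar (hac : a ≠ c) (hbc : b ≠ c) :
    IsRelIndependent (Subgroup.closure {swap a b}) (threeCycleStar a b c) := by
  refine isRelIndependent_of_forall_exists_subgroup ?_
  rintro _ (rfl | ⟨k, hk, rfl⟩)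
  · exact ⟨stabilizer (Perm α) {a, b},
      Perm.stabilizer_ne_top_of_nonempty_of_nonempty_compl ⟨a, by simp⟩
        ⟨c, by simp [hac.symm, hbc.symm]⟩,
      closure_swap_le_stabilizer (by simp),
      threeCycleStar_sdiff_threeCycle_subset_stabilizer hac hbc⟩
  · obtain ⟨hka, hkb, -⟩ : a ≠ k ∧ b ≠ k ∧ c ≠ k := by simpa [eq_comm] using hk
    exact ⟨stabilizer (Perm α) {k},
      Perm.stabilizer_ne_top_of_nonempty_of_nonempty_compl (Set.singleton_nonempty k) ⟨a, hka⟩,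
      closure_swap_le_stabilizer (by simp [hka, hkb]),
      threeCycleStar_sdiff_swap_mul_swap_subset_stabilizer hk⟩

theorem swap_mul_swap_ne_swap_mul_swap (hac : a ≠ c) (hbc : b ≠ c) (hkb : k ≠ b) :
    swap a c * swap a b ≠ swap a b * swap c k := fun h => hac <| by
  simpa [swap_apply_of_ne_of_ne hbc hkb.symm] using (DFunLike.congr_fun h b).symm

theorem ncard_threeCycleStar [Finite α] (hab : a ≠ b) (hac : a ≠ c) (hbc : b ≠ c) :
    (threeCycleStar a b c).ncard = Nat.card α - 2 := by
  have htriple : ({a, b, c} : Set α).ncard = 3 := Set.ncard_eq_three.2 ⟨a, b, c, hab, hac, hbc, rfl⟩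
  have hle : 3 ≤ Nat.card α := htriple ▸ Set.ncard_le_card _
  have hnotMem : swap a c * swap a b ∉ (fun k => swap a b * swap c k) '' {a, b, c}ᶜ := by
    rintro ⟨k, hk, h⟩
    exact swap_mul_swap_ne_swap_mul_swap hac hbc (by rintro rfl; simp at hk) h.symm
  rw [threeCycleStar, Set.ncard_insert_of_notMem hnotMem,
    Set.ncard_image_of_injective _ fun i j h => swap_injective_of_left c (mul_left_cancel h),
    Set.ncard_compl, htriple]
  omega

theorem symmetric_group_K_independent_set_general [Finite α]
    (hab : a ≠ b) (hac : a ≠ c) (hbc : b ≠ c) :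
    IsRelGenerating (Subgroup.closure {swap a b}) (threeCycleStar a b c) ∧
    IsRelIndependent (Subgroup.closure {swap a b}) (threeCycleStar a b c) ∧
    (threeCycleStar a b c).ncard = Nat.card α - 2 ∧
    Nat.card α - 2 ≤ mRel (Subgroup.closure {swap a b}) := by
  have hgen := isRelGenerating_threeCycleStar (a := a) (b := b) (c := c)
  have hind := isRelIndependent_threeCycleStar (b := b) hac hbc
  have hcard := ncard_threeCycleStar hab hac hbc
  exact ⟨hgen, hind, hcard, hcard ▸ ncard_le_mRel hgen hind⟩

end Perm

section Fin

open Equiv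

variable {n : ℕ} [NeZero n]

theorem compl_zero_one_two (hn : 3 ≤ n) :
    ({0, 1, 2} : Set (Fin n))ᶜ = {k : Fin n | 3 ≤ (k : ℕ)} := by
  ext k
  simp only [Set.mem_compl_iff, Set.mem_insert_iff, Set.mem_singleton_iff, Set.mem_ofPred_eq,
    Fin.ext_iff, Fin.coe_ofNat_eq_mod, Nat.zero_mod, Nat.mod_eq_of_lt (show 1 < n by omega),
    Nat.mod_eq_of_lt (show 2 < n by omega)]
  omega

theorem zero_one_two_pairwise_ne (hn : 3 ≤ n) :
    (0 : Fin n) ≠ 1 ∧ (0 : Fin n) ≠ 2 ∧ (1 : Fin n) ≠ 2 := by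
  simp only [ne_eq, Fin.ext_iff, Fin.coe_ofNat_eq_mod, Nat.zero_mod,
    Nat.mod_eq_of_lt (show 1 < n by omega), Nat.mod_eq_of_lt (show 2 < n by omega)]
  omega

theorem threeCycleStar_zero_one_two (hn : 3 ≤ n) :
    threeCycleStar (0 : Fin n) 1 2 = insert (swap (0 : Fin n) 2 * swap 0 1)
      {x | ∃ k : Fin n, 3 ≤ (k : ℕ) ∧ x = swap (0 : Fin n) 1 * swap 2 k} := by
  rw [threeCycleStar, compl_zero_one_two hn]
  simp only [Set.image, Set.mem_ofPred_eq, eq_comm]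

end Fin

/-- Let `n ≥ 5`, `H = Sym(n)` (realized as the permutations of `Fin n`, where
`i : Fin n` represents the point `i + 1`), and `K = ⟨(1 2)⟩`. Then
`Λ = {(1 2 3), (1 2)(3 4), (1 2)(3 5), …, (1 2)(3 n)}` is a `K`-independent
`K`-generating set for `H` of cardinality `n - 2`; in particular
`m_K(Sym(n)) ≥ n - 2`. -/
theorem symmetric_group_K_independent_set (n : ℕ) [NeZero n] (hn : 5 ≤ n)
    (K : Subgroup (Equiv.Perm (Fin n)))
    (hK : K = Subgroup.closure {Equiv.swap (0 : Fin n) 1})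
    (Λ : Set (Equiv.Perm (Fin n)))
    (hΛ : Λ = insert (Equiv.swap (0 : Fin n) 2 * Equiv.swap 0 1)
      {x | ∃ k : Fin n, 3 ≤ (k : ℕ) ∧ x = Equiv.swap (0 : Fin n) 1 * Equiv.swap 2 k}) :
    K ⊔ Subgroup.closure Λ = ⊤ ∧
    (∀ Z : Set (Equiv.Perm (Fin n)), Z ⊂ Λ → K ⊔ Subgroup.closure Z ≠ ⊤) ∧
    Λ.ncard = n - 2 ∧
    n - 2 ≤ mRel K := by
  obtain ⟨h01, h02, h12⟩ := zero_one_two_pairwise_ne (n := n) (by omega)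
  have h := symmetric_group_K_independent_set_general h01 h02 h12
  rw [Nat.card_fin] at h
  rw [hK, hΛ, ← threeCycleStar_zero_one_two (by omega)]
  exact h
end
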